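/- Let n ≥ 2 and fix 0 < δ < 1. Let β ≥ 0 and α be real numbers such that either (n−3)/2 < β < (n−1)/2 and α ≤ 2β − (n−3)/2, or β ≥ (n−1)/2 and α < β + 1. Then there is a constant C (depending on n, δ, α, β and χ) such that for every Schwartz function q on ℝⁿ and every r ∈ (1−δ, 1+δ), ‖ ∂_r ( χ(·) S_r(q)(·) ) ‖_{L²_{α−1}} ≤ C ‖q‖²_{W^{β,2}_2}. -/

import Mathlib

open MeasureTheory Filter Set
open scoped ENNReal RealInnerProductSpace

noncomputable section

abbrev Euc (n : ℕ) := EuclideanSpace ℝ (Fin n)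

/-- The Japanese bracket `⟨x⟩ = (1+|x|²)^{1/2}`. -/
def jap {n : ℕ} (x : Euc n) : ℝ := Real.sqrt (1 + ‖x‖ ^ 2)

/-- The Ewald sphere measure `σ_{rη}`: the `(n-1)`-dimensional Hausdorff measure restricted
to `Γ_r(η) = {ξ : |ξ - η/2| = r|η|/2}`. -/
def ewaldM (n : ℕ) (r : ℝ) (η : Euc n) : Measure (Euc n) :=
  (MeasureTheory.Measure.hausdorffMeasure ((n : ℝ) - 1)).restrict
    (Metric.sphere ((2 : ℝ)⁻¹ • η) (r * ‖η‖ / 2))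

/-- The Fourier transform `f̂(ξ) = ∫ e^{-iξ·x} f(x) dx`. -/
def ft {n : ℕ} (f : Euc n → ℂ) (ξ : Euc n) : ℂ :=
  ∫ x : Euc n, Complex.exp (-Complex.I * ((⟪ξ, x⟫ : ℝ) : ℂ)) * f x

/-- `⟨D⟩^β f`: inverse Fourier transform of `⟨ξ⟩^β f̂(ξ)`. -/
def besselD {n : ℕ} (β : ℝ) (f : Euc n → ℂ) (x : Euc n) : ℂ :=
  (((2 * Real.pi) ^ n : ℝ)⁻¹ : ℝ) •
    ∫ ξ : Euc n, Complex.exp (Complex.I * ((⟪ξ, x⟫ : ℝ) : ℂ)) *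
      (((jap ξ ^ β : ℝ) : ℂ) * ft f ξ)

/-- The weighted Sobolev norm `‖f‖_{W^{β,2}_δ} = ‖⟨·⟩^δ ⟨D⟩^β f‖_{L²}`. -/
def wSobNorm {n : ℕ} (β δ : ℝ) (f : Euc n → ℂ) : ℝ≥0∞ :=
  eLpNorm (fun x : Euc n => (jap x ^ δ : ℝ) • besselD β f x) 2 volume

/-- The spherical operator
`S_r(q)(η) = (2/(|η|(1+r))) ∫_{Γ_r(η)} q̂(ξ) q̂(η-ξ) dσ_{rη}(ξ)`. -/
def Sr {n : ℕ} (r : ℝ) (q : Euc n → ℂ) (η : Euc n) : ℂ :=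
  ((2 / (‖η‖ * (1 + r))) : ℝ) • ∫ ξ, ft q ξ * ft q (η - ξ) ∂(ewaldM n r η)

/-- `K_r(g₁,g₂)(η) = (1/|η|) ∫_{Γ_r(η)} |g₁(ξ)||g₂(η-ξ)| dσ_{rη}(ξ)`. -/
def Kr {n : ℕ} (r : ℝ) (g₁ g₂ : Euc n → ℂ) (η : Euc n) : ℝ :=
  ‖η‖⁻¹ * ∫ ξ, ‖g₁ ξ‖ * ‖g₂ (η - ξ)‖ ∂(ewaldM n r η)

/-! In polar form the Ewald sphere `Γ_r(η)` consists of the antipodal points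
`Φ_{±r}(θ, η) = (η ∓ r|η|θ)/2`, `|θ| = 1`, whose sum is `η`. A derivative in `r` therefore costs
one derivative of `q̂` at one of the points and a factor `|η|`, and it suffices to bound the
integral of `g(Φ_{-r}) g(Φ_r)` over the sphere, where `g = |q̂| + |∇q̂|`. By symmetry only the
half sphere `⟪η, θ⟫ ≤ 0` matters, where `|Φ_r| ≥ |η|/2`.

Write `g = ⟨·⟩^{-β} h`. As `Φ_r` and `Φ_{-r}` have the same component orthogonal to `θ`, the
factors `⟨·⟩^{-β}` at the two points absorb the weight in `η` up to `(sin φ)^{-b}`, `0 ≤ b ≤ β`,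
with `φ` the angle between `θ` and `Φ_r`. Apply Cauchy–Schwarz in `θ`. The integral of `h(Φ_{-r})²`
is bounded by the trace theorem for spheres, uniformly in centre and radius. That of
`(sin φ)^{-2b} h(Φ_r)²` is integrated in `η` by substituting `ζ = Φ_r(θ, η)`, which has a Lipschitz
inverse on `⟪η, θ⟫ ≤ 0`; the sine weight is integrable over the sphere when `2b < n - 1`. The
derivative in `g` and the one lost in the trace are two derivatives of `⟨ξ⟩^β q̂`, which Plancherel
turns into the weight `⟨x⟩²`. -/

section Bracket

variable {n : ℕ}

lemma jap_pos (x : Euc n) : 0 < jap x := by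
  unfold jap; positivity

lemma jap_sq (x : Euc n) : jap x ^ 2 = 1 + ‖x‖ ^ 2 :=
  Real.sq_sqrt (by positivity)

lemma norm_le_jap (x : Euc n) : ‖x‖ ≤ jap x :=
  Real.le_sqrt_of_sq_le (by linarith)

lemma one_le_jap (x : Euc n) : 1 ≤ jap x :=
  Real.le_sqrt_of_sq_le (by nlinarith [sq_nonneg ‖x‖])

lemma jap_le_two_mul_norm {x : Euc n} (hx : 1 ≤ ‖x‖) : jap x ≤ 2 * ‖x‖ :=
  Real.sqrt_le_iff.2 ⟨by positivity, by nlinarith⟩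

lemma jap_rpow (β : ℝ) (x : Euc n) : jap x ^ β = (1 + ‖x‖ ^ 2) ^ (β / 2) := by
  rw [jap, Real.sqrt_eq_rpow, ← Real.rpow_mul (by positivity)]
  congr 1; ring

@[fun_prop]
lemma continuous_jap : Continuous (jap (n := n)) := by
  unfold jap; fun_prop

end Bracket

section Lintegral

lemma sq_sum_le_card_mul_sum_sq_ennreal {ι : Type*} [Fintype ι] (f : ι → ℝ≥0∞) :
    (∑ i, f i) ^ 2 ≤ (Fintype.card ι : ℝ≥0∞) * ∑ i, f i ^ 2 := by
  have h := ENNReal.rpow_sum_le_const_mul_sum_rpow Finset.univ f (one_le_two (α := ℝ))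
  norm_num at h
  simpa only [Finset.card_univ] using h

lemma add_sq_le_two_mul_ennreal (a b : ℝ≥0∞) : (a + b) ^ 2 ≤ 2 * (a ^ 2 + b ^ 2) := by
  simpa [Fin.sum_univ_two] using sq_sum_le_card_mul_sum_sq_ennreal ![a, b]

variable {X : Type*} [MeasurableSpace X] {μ : Measure X}

lemma sq_lintegral_mul_le {f g : X → ℝ≥0∞} (hf : AEMeasurable f μ) (hg : AEMeasurable g μ) :
    (∫⁻ x, f x * g x ∂μ) ^ 2 ≤ (∫⁻ x, f x ^ 2 ∂μ) * ∫⁻ x, g x ^ 2 ∂μ := by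
  have holder := ENNReal.lintegral_mul_le_Lp_mul_Lq μ Real.HolderConjugate.two_two hf hg
  refine (pow_le_pow_left' holder 2).trans_eq ?_
  rw [mul_pow, ← ENNReal.rpow_natCast, ← ENNReal.rpow_natCast, ← ENNReal.rpow_mul,
    ← ENNReal.rpow_mul]
  norm_num

lemma eLpNorm_two_sq {F : Type*} [NormedAddCommGroup F] (f : X → F) :
    eLpNorm f 2 μ ^ 2 = ∫⁻ x, ‖f x‖ₑ ^ 2 ∂μ := by
  simpa using eLpNorm_nnreal_pow_eq_lintegral (f := f) (μ := μ) (p := 2) two_ne_zero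

lemma eLpNorm_two_le_of_lintegral_sq_le {F : Type*} [NormedAddCommGroup F] {f : X → F} {C : ℝ≥0∞}
    (h : ∫⁻ x, ‖f x‖ₑ ^ 2 ∂μ ≤ C ^ 2) : eLpNorm f 2 μ ≤ C :=
  (ENNReal.pow_le_pow_left_iff two_ne_zero).1 ((eLpNorm_two_sq f).trans_le h)

lemma lintegral_Ioo_ofReal_pow (d : ℕ) {a : ℝ} (ha : 0 ≤ a) :
    ∫⁻ t in Ioo 0 a, ENNReal.ofReal (t ^ d) = ENNReal.ofReal (a ^ (d + 1) / (d + 1)) := by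
  rw [← Measure.restrict_congr_set Ioo_ae_eq_Ioc.symm, ← ofReal_integral_eq_lintegral_ofReal]
  · rw [← intervalIntegral.integral_of_le ha, integral_pow]
    simp
  · exact (intervalIntegrable_iff_integrableOn_Ioc_of_le ha).1
      ((continuous_pow d).intervalIntegrable 0 a)
  · exact (ae_restrict_mem measurableSet_Ioc).mono fun t ht => pow_nonneg ht.1.le d

end Lintegral

section AddHaar

variable {E : Type*} [NormedAddCommGroup E] [NormedSpace ℝ E] [FiniteDimensional ℝ E]
  [MeasurableSpace E] [BorelSpace E] (μ : Measure E) [μ.IsAddHaarMeasure]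

lemma addHaar_cone {B : Set E} (hB : MeasurableSet B) {a : ℝ} (ha : 0 ≤ a) :
    ((volume : Measure ℝ).prod μ) {p | p.1 ∈ Ioo 0 a ∧ p.1⁻¹ • p.2 ∈ B} =
      ENNReal.ofReal (a ^ (Module.finrank ℝ E + 1) / (Module.finrank ℝ E + 1)) * μ B := by
  have hcone : MeasurableSet {p : ℝ × E | p.1 ∈ Ioo 0 a ∧ p.1⁻¹ • p.2 ∈ B} :=
    (measurableSet_Ioo.preimage measurable_fst).inter (hB.preimage (by fun_prop))
  have slice : ∀ t : ℝ, μ (Prod.mk t ⁻¹' {p : ℝ × E | p.1 ∈ Ioo 0 a ∧ p.1⁻¹ • p.2 ∈ B}) =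
      (Ioo 0 a).indicator (fun t => ENNReal.ofReal (t ^ Module.finrank ℝ E) * μ B) t := by
    intro t
    by_cases ht : t ∈ Ioo 0 a
    · have heq : Prod.mk t ⁻¹' {p : ℝ × E | p.1 ∈ Ioo 0 a ∧ p.1⁻¹ • p.2 ∈ B} =
          (t⁻¹ • ·) ⁻¹' B := by
        ext y; exact and_iff_right ht
      rw [indicator_of_mem ht, heq, Measure.addHaar_preimage_smul _ (inv_ne_zero ht.1.ne'),
        inv_pow, inv_inv, abs_of_pos (pow_pos ht.1 _)]
    · have heq : Prod.mk t ⁻¹' {p : ℝ × E | p.1 ∈ Ioo 0 a ∧ p.1⁻¹ • p.2 ∈ B} = ∅ := by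
        ext y; exact iff_of_false (fun h => ht h.1) (notMem_empty y)
      rw [indicator_of_notMem ht, heq, measure_empty]
  rw [Measure.prod_apply hcone, lintegral_congr slice, lintegral_indicator measurableSet_Ioo,
    lintegral_mul_const _ (by fun_prop), lintegral_Ioo_ofReal_pow _ ha]

lemma map_restrict_le_of_antilipschitz {f : E → E} (hf : Measurable f) {K : NNReal} {H : Set E}
    (hK : AntilipschitzWith K (H.domRestrict f)) :
    (μ.restrict H).map f ≤ (K : ℝ≥0∞) ^ Module.finrank ℝ E • μ := by
  set d : ℝ := (Module.finrank ℝ E : ℝ) with hd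
  have hd0 : 0 ≤ d := Nat.cast_nonneg _
  obtain ⟨c, hc⟩ : ∃ c : NNReal, μ = c • Measure.hausdorffMeasure d :=
    ⟨_, Measure.isAddLeftInvariant_eq_smul _ _⟩
  refine Measure.le_iff.2 fun A hA => ?_
  have himage : Subtype.val '' (H.domRestrict f ⁻¹' A) = f ⁻¹' A ∩ H := by
    rw [domRestrict_eq, preimage_comp, Subtype.image_preimage_coe, inter_comm]
  have hle : Measure.hausdorffMeasure d (f ⁻¹' A ∩ H) ≤
      (K : ℝ≥0∞) ^ d * Measure.hausdorffMeasure d A := by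
    rw [← himage, isometry_subtype_coe.hausdorffMeasure_image (Or.inl hd0)]
    exact hK.hausdorffMeasure_preimage_le hd0 A
  rw [Measure.map_apply hf hA, Measure.restrict_apply (hf hA), Measure.smul_apply, smul_eq_mul,
    ← ENNReal.rpow_natCast, ← hd, hc, Measure.smul_apply, Measure.smul_apply, ENNReal.smul_def,
    ENNReal.smul_def, smul_eq_mul, smul_eq_mul, mul_left_comm]
  gcongr

lemma setLIntegral_comp_le_of_antilipschitz {f : E → E} (hf : Measurable f) {K : NNReal}
    {H : Set E} (hK : AntilipschitzWith K (H.domRestrict f))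
    {F : E → ℝ≥0∞} (hF : Measurable F) :
    ∫⁻ x in H, F (f x) ∂μ ≤ (K : ℝ≥0∞) ^ Module.finrank ℝ E * ∫⁻ x, F x ∂μ := by
  rw [← lintegral_map hF hf, ← smul_eq_mul, ← lintegral_smul_measure]
  exact lintegral_mono' (map_restrict_le_of_antilipschitz μ hf hK) le_rfl

end AddHaar

section Polar

open NormedSpace

variable {E : Type*} [NormedAddCommGroup E] [NormedSpace ℝ E] [MeasurableSpace E]

/-- The surface measure of polar coordinates with respect to `μ`, viewed as a measure on the
whole space (carried by the unit sphere) rather than on the sphere as a subtype. -/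
def polarMeasure (μ : Measure E) : Measure E :=
  μ.toSphere.map Subtype.val

variable [BorelSpace E] (μ : Measure E)

instance [FiniteDimensional ℝ E] [μ.IsAddHaarMeasure] : IsFiniteMeasure (polarMeasure μ) := by
  unfold polarMeasure; infer_instance

lemma norm_eq_one_ae_polarMeasure : ∀ᵐ θ ∂(polarMeasure μ), ‖θ‖ = 1 := by
  rw [polarMeasure, ae_map_iff measurable_subtype_coe.aemeasurable
    (measurableSet_eq_fun (by fun_prop) (by fun_prop))]
  exact Eventually.of_forall norm_eq_of_mem_sphere

lemma polarMeasure_apply {A : Set E} (hA : MeasurableSet A) :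
    polarMeasure μ A = Module.finrank ℝ E * μ {x | x ≠ 0 ∧ ‖x‖ < 1 ∧ normalize x ∈ A} := by
  rw [polarMeasure, Measure.map_apply measurable_subtype_coe hA,
    Measure.toSphere_apply' _ (measurable_subtype_coe hA)]
  congr 2
  ext x
  constructor
  · rintro ⟨t, ⟨ht0, ht1⟩, _, ⟨⟨θ, hθ⟩, hθA, rfl⟩, rfl⟩
    have hθ1 : ‖θ‖ = 1 := by simpa using hθ
    refine ⟨smul_ne_zero ht0.ne' (norm_ne_zero_iff.1 (by simp [hθ1])), ?_, ?_⟩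
    · simpa [norm_smul, hθ1, abs_of_pos ht0] using ht1
    · simpa [normalize_smul_of_pos ht0, normalize_eq_self_of_norm_eq_one hθ1] using hθA
  · rintro ⟨hx0, hx1, hxA⟩
    exact ⟨‖x‖, ⟨norm_pos_iff.2 hx0, hx1⟩, normalize x,
      ⟨⟨normalize x, by simpa using norm_normalize_eq_one_iff.2 hx0⟩, hxA, rfl⟩,
      norm_smul_normalize x⟩

lemma lintegral_polarMeasure [FiniteDimensional ℝ E] [Nontrivial E] [μ.IsAddHaarMeasure]
    {f : E → ℝ≥0∞} (hf : Measurable f) :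
    ∫⁻ θ, (∫⁻ t in Ioi (0 : ℝ), ENNReal.ofReal (t ^ (Module.finrank ℝ E - 1)) * f (t • θ))
      ∂(polarMeasure μ) = ∫⁻ x, f x ∂μ := by
  let g : Metric.sphere (0 : E) 1 × Ioi (0 : ℝ) → ℝ≥0∞ := fun p => f ((p.2 : ℝ) • (p.1 : E))
  have hg : Measurable g := hf.comp (by fun_prop)
  have hfg : ∀ x : ({0}ᶜ : Set E), f x = g (homeomorphUnitSphereProd E x) := fun x =>
    congrArg (fun y : ({0}ᶜ : Set E) => f y)
      ((homeomorphUnitSphereProd E).symm_apply_apply x).symm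
  have hsphere : ∫⁻ x, f x ∂μ = ∫⁻ p, g p
      ∂(μ.toSphere.prod (Measure.volumeIoiPow (Module.finrank ℝ E - 1))) := by
    rw [← μ.measurePreserving_homeomorphUnitSphereProd.lintegral_comp hg, ← lintegral_congr hfg,
      lintegral_subtype_comap (measurableSet_singleton _).compl, restrict_compl_singleton]
  rw [hsphere, lintegral_prod _ hg.aemeasurable, polarMeasure,
    lintegral_map (Measurable.lintegral_prod_right (by fun_prop)) measurable_subtype_coe]
  refine lintegral_congr fun θ => ?_
  rw [Measure.volumeIoiPow, lintegral_withDensity_eq_lintegral_mul _ (by fun_prop) (by fun_prop)]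
  exact (lintegral_subtype_comap measurableSet_Ioi
    (fun t : ℝ => ENNReal.ofReal (t ^ (Module.finrank ℝ E - 1)) * f (t • (θ : E)))).symm

end Polar

section SphereMeasure

open NormedSpace
open scoped Pointwise

lemma norm_normalize_sub_normalize_le {E : Type*} [NormedAddCommGroup E] [NormedSpace ℝ E]
    {x y : E} (hx : 1 ≤ ‖x‖) (hy : 1 ≤ ‖y‖) : ‖normalize x - normalize y‖ ≤ 2 * ‖x - y‖ := by
  have hx0 : 0 < ‖x‖ := one_pos.trans_le hx
  have hy0 : 0 < ‖y‖ := one_pos.trans_le hy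
  have split : normalize x - normalize y = ‖x‖⁻¹ • ((x - y) + (‖y‖ - ‖x‖) • normalize y) := by
    have hsmul : (‖y‖ - ‖x‖) • normalize y = y - ‖x‖ • normalize y := by
      rw [sub_smul, norm_smul_normalize]
    rw [hsmul, sub_add_sub_cancel, smul_sub, inv_smul_smul₀ hx0.ne']
    rfl
  have hunit : ‖normalize y‖ = 1 := norm_normalize_eq_one_iff.2 (norm_pos_iff.1 hy0)
  calc ‖normalize x - normalize y‖
      = ‖x‖⁻¹ * ‖(x - y) + (‖y‖ - ‖x‖) • normalize y‖ := by
        rw [split, norm_smul, norm_inv, norm_norm]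
    _ ≤ 1 * (‖x - y‖ + |‖y‖ - ‖x‖| * 1) := by
        gcongr
        · exact inv_le_one_of_one_le₀ hx
        · refine (norm_add_le _ _).trans_eq ?_
          rw [norm_smul, hunit, Real.norm_eq_abs]
    _ ≤ 2 * ‖x - y‖ := by
        have := abs_norm_sub_norm_le y x
        rw [norm_sub_rev y x] at this
        linarith

variable {m : ℕ}

/-- The surface measure of the unit sphere of `ℝ^{m+1}`. -/
def sphereMeasure (m : ℕ) : Measure (Euc (m + 1)) :=
  (Measure.hausdorffMeasure (m : ℝ)).restrict (Metric.sphere 0 1)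

/-- The point with `i`-th coordinate `1` and remaining coordinates `y`: a parametrisation of the
hyperplane containing a face of the cube `[-1, 1]^{m+1}`. -/
def cubeFace (i : Fin (m + 1)) (y : Fin m → ℝ) : Euc (m + 1) :=
  WithLp.toLp 2 (i.insertNth (α := fun _ => ℝ) 1 y)

@[simp]
lemma cubeFace_apply_self (i : Fin (m + 1)) (y : Fin m → ℝ) : cubeFace i y i = 1 := by
  simp [cubeFace]

@[simp]
lemma cubeFace_apply_succAbove (i : Fin (m + 1)) (y : Fin m → ℝ) (j : Fin m) :
    cubeFace i y (i.succAbove j) = y j := by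
  simp [cubeFace]

lemma cubeFace_smul_succAbove {i : Fin (m + 1)} {x : Euc (m + 1)} (hx : x i ≠ 0) :
    cubeFace i ((x i)⁻¹ • fun j => x (i.succAbove j)) = (x i)⁻¹ • x := by
  ext j
  rcases Fin.eq_self_or_eq_succAbove i j with rfl | ⟨j, rfl⟩ <;> simp [hx]

lemma one_le_norm_cubeFace (i : Fin (m + 1)) (y : Fin m → ℝ) : 1 ≤ ‖cubeFace i y‖ := by
  simpa using PiLp.norm_apply_le (cubeFace i y) i

lemma exists_lipschitzWith_cubeFace (i : Fin (m + 1)) :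
    ∃ K : NNReal, LipschitzWith K (cubeFace (m := m) i) := by
  refine ⟨_, (PiLp.lipschitzWith_toLp 2 (fun _ : Fin (m + 1) => ℝ)).comp
    (g := fun y => i.insertNth (α := fun _ => ℝ) 1 y) (Kg := 1) ?_⟩
  refine LipschitzWith.of_dist_le_mul fun y y' => ?_
  rw [NNReal.coe_one, one_mul, dist_pi_le_iff dist_nonneg, Fin.forall_iff_succAbove i]
  exact ⟨by simp, fun j => by simpa using dist_le_pi_dist y y' j⟩

lemma exists_lipschitzWith_normalize_cubeFace (i : Fin (m + 1)) :
    ∃ K : NNReal, LipschitzWith K fun y => normalize (cubeFace (m := m) i y) := by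
  obtain ⟨K, hK⟩ := exists_lipschitzWith_cubeFace (m := m) i
  refine ⟨2 * K, LipschitzWith.of_dist_le_mul fun y y' => ?_⟩
  rw [dist_eq_norm]
  calc _ ≤ 2 * ‖cubeFace i y - cubeFace i y'‖ :=
        norm_normalize_sub_normalize_le (one_le_norm_cubeFace i y) (one_le_norm_cubeFace i y')
    _ ≤ 2 * (K * dist y y') := by
        rw [← dist_eq_norm]; gcongr; exact hK.dist_le_mul y y'
    _ = _ := by push_cast; ring

lemma norm_le_card_mul_of_forall_abs_le {ι : Type*} [Fintype ι] {x : EuclideanSpace ℝ ι} {a : ℝ}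
    (ha : 0 ≤ a) (hx : ∀ j, |x j| ≤ a) : ‖x‖ ≤ Fintype.card ι * a := by
  have hsq : ‖x‖ ^ 2 ≤ Fintype.card ι * a ^ 2 := by
    rw [EuclideanSpace.norm_sq_eq, ← nsmul_eq_mul]
    exact Finset.sum_le_card_nsmul _ _ _ fun j _ => pow_le_pow_left₀ (norm_nonneg _) (hx j) 2
  refine (pow_le_pow_iff_left₀ (norm_nonneg _) (by positivity) two_ne_zero).1 (hsq.trans ?_)
  rw [mul_pow]
  gcongr
  exact_mod_cast Nat.le_self_pow two_ne_zero _

lemma volume_cubeFace_cone (i : Fin (m + 1)) {B : Set (Fin m → ℝ)} (hB : MeasurableSet B) {a : ℝ}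
    (ha : 0 ≤ a) :
    volume {x : Euc (m + 1) | x i ∈ Ioo 0 a ∧ ((x i)⁻¹ • fun j => x (i.succAbove j)) ∈ B} =
      ENNReal.ofReal (a ^ (m + 1) / (m + 1)) * volume B := by
  have hcone : MeasurableSet {p : ℝ × (Fin m → ℝ) | p.1 ∈ Ioo 0 a ∧ p.1⁻¹ • p.2 ∈ B} :=
    (measurableSet_Ioo.preimage measurable_fst).inter (hB.preimage (by fun_prop))
  have hpres : MeasurePreserving (fun x : Euc (m + 1) => (x i, fun j => x (i.succAbove j))) :=
    (volume_preserving_piFinSuccAbove (fun _ => ℝ) i).comp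
      (PiLp.volume_preserving_ofLp (Fin (m + 1)))
  have hvol := addHaar_cone (volume : Measure (Fin m → ℝ)) hB ha
  rw [Module.finrank_fin_fun, ← Measure.volume_eq_prod,
    ← hpres.measure_preimage hcone.nullMeasurableSet] at hvol
  exact hvol

lemma volume_le_polarMeasure (i : Fin (m + 1)) {B : Set (Fin m → ℝ)} (hB : MeasurableSet B)
    (hB1 : ∀ y ∈ B, ∀ j, |y j| ≤ 1) {A : Set (Euc (m + 1))} (hA : MeasurableSet A)
    (hBA : ∀ y ∈ B, normalize (cubeFace i y) ∈ A) :
    volume B ≤ ENNReal.ofReal ((m + 1) ^ (m + 1)) * polarMeasure volume A := by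
  have hcone := volume_cubeFace_cone i hB (a := ((m : ℝ) + 1)⁻¹) (by positivity)
  have hsub : {x : Euc (m + 1) | x i ∈ Ioo 0 ((m : ℝ) + 1)⁻¹ ∧
      ((x i)⁻¹ • fun j => x (i.succAbove j)) ∈ B} ⊆ {x | x ≠ 0 ∧ ‖x‖ < 1 ∧ normalize x ∈ A} := by
    rintro x ⟨⟨hx0, hx1⟩, hxB⟩
    have hface := cubeFace_smul_succAbove hx0.ne'
    refine ⟨fun h => by simp [h] at hx0, ?_, ?_⟩
    · have hcoord : ∀ j, |x j| ≤ x i := by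
        intro j
        rcases Fin.eq_self_or_eq_succAbove i j with rfl | ⟨j, rfl⟩
        · exact (abs_of_pos hx0).le
        · simpa [abs_mul, abs_of_pos hx0, inv_mul_le_iff₀ hx0] using hB1 _ hxB j
      refine (norm_le_card_mul_of_forall_abs_le hx0.le hcoord).trans_lt ?_
      rw [Fintype.card_fin, Nat.cast_add_one]
      exact (lt_inv_mul_iff₀ (by positivity)).1 (by simpa using hx1)
    · rw [← normalize_smul_of_pos (inv_pos.2 hx0), ← hface]
      exact hBA _ hxB
  calc volume B
      = ENNReal.ofReal ((m + 1) ^ (m + 1)) * ((m + 1 : ℕ) *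
          (ENNReal.ofReal (((m : ℝ) + 1)⁻¹ ^ (m + 1) / (m + 1)) * volume B)) := by
        rw [← ENNReal.ofReal_natCast, ← mul_assoc, ← mul_assoc,
          ← ENNReal.ofReal_mul (by positivity), ← ENNReal.ofReal_mul (by positivity)]
        have hone : ((m : ℝ) + 1) ^ (m + 1) * (m + 1 : ℕ) *
            (((m : ℝ) + 1)⁻¹ ^ (m + 1) / (m + 1)) = 1 := by
          push_cast; rw [inv_pow]; field_simp
        rw [hone, ENNReal.ofReal_one, one_mul]
    _ ≤ ENNReal.ofReal ((m + 1) ^ (m + 1)) * ((m + 1 : ℕ) *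
          volume {x : Euc (m + 1) | x ≠ 0 ∧ ‖x‖ < 1 ∧ normalize x ∈ A}) := by
        rw [← hcone]; gcongr
    _ = ENNReal.ofReal ((m + 1) ^ (m + 1)) * polarMeasure volume A := by
        rw [polarMeasure_apply _ hA, finrank_euclideanSpace_fin]

lemma hausdorffMeasure_sphere_face_le (i : Fin (m + 1)) : ∃ C : ℝ≥0∞, C ≠ ⊤ ∧
    ∀ A : Set (Euc (m + 1)), MeasurableSet A →
      Measure.hausdorffMeasure (m : ℝ) {x ∈ A | ‖x‖ = 1 ∧ ∀ j, |x j| ≤ x i} ≤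
        C * polarMeasure volume A := by
  obtain ⟨K, hK⟩ := exists_lipschitzWith_normalize_cubeFace (m := m) i
  refine ⟨(K : ℝ≥0∞) ^ (m : ℝ) * ENNReal.ofReal ((m + 1) ^ (m + 1)), by finiteness, ?_⟩
  intro A hA
  set B : Set (Fin m → ℝ) := {y | (∀ j, |y j| ≤ 1) ∧ normalize (cubeFace i y) ∈ A}
  have hB : MeasurableSet B := by
    refine MeasurableSet.inter (s₁ := {y : Fin m → ℝ | ∀ j, |y j| ≤ 1}) ?_
      (hA.preimage hK.continuous.measurable)
    rw [ofPred_forall]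
    exact MeasurableSet.iInter fun j => measurableSet_le (by fun_prop) (by fun_prop)
  have hsub : {x ∈ A | ‖x‖ = 1 ∧ ∀ j, |x j| ≤ x i} ⊆ (fun y => normalize (cubeFace i y)) '' B := by
    rintro x ⟨hxA, hx1, hx⟩
    have hpos : 0 < x i := by
      refine ((abs_nonneg _).trans (hx i)).lt_of_ne' fun h0 => ?_
      have hx0 : x = 0 := by ext j; simpa [h0] using hx j
      simp [hx0] at hx1
    have hnorm : normalize (cubeFace i ((x i)⁻¹ • fun j => x (i.succAbove j))) = x := by
      rw [cubeFace_smul_succAbove hpos.ne', normalize_smul_of_pos (inv_pos.2 hpos),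
        normalize_eq_self_of_norm_eq_one hx1]
    refine ⟨_, ⟨fun j => ?_, by rwa [hnorm]⟩, hnorm⟩
    simpa [abs_mul, abs_of_pos hpos, inv_mul_le_iff₀ hpos] using hx (i.succAbove j)
  have hpi : (Measure.hausdorffMeasure (m : ℝ) : Measure (Fin m → ℝ)) = volume := by
    simpa using hausdorffMeasure_pi_real (ι := Fin m)
  calc _ ≤ (K : ℝ≥0∞) ^ (m : ℝ) * volume B := by
        rw [← hpi]
        exact (measure_mono hsub).trans (hK.hausdorffMeasure_image_le (Nat.cast_nonneg m) B)
    _ ≤ _ := by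
        rw [mul_assoc]
        gcongr
        exact volume_le_polarMeasure i hB (fun y hy => hy.1) hA fun y hy => hy.2

lemma polarMeasure_neg_preimage {E : Type*} [NormedAddCommGroup E] [NormedSpace ℝ E]
    [MeasurableSpace E] [BorelSpace E] (μ : Measure E) [μ.IsNegInvariant] {A : Set E}
    (hA : MeasurableSet A) : polarMeasure μ (Neg.neg ⁻¹' A) = polarMeasure μ A := by
  rw [polarMeasure_apply μ hA, polarMeasure_apply μ (measurable_neg hA),
    ← Measure.measure_preimage_neg μ {x | x ≠ 0 ∧ ‖x‖ < 1 ∧ normalize x ∈ A}]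
  congr 2
  ext x
  simp [normalize_neg]

lemma hausdorffMeasure_neg_preimage {E : Type*} [NormedAddCommGroup E] [MeasurableSpace E]
    [BorelSpace E] (d : ℝ) (A : Set E) :
    Measure.hausdorffMeasure d (Neg.neg ⁻¹' A) = Measure.hausdorffMeasure d A :=
  (IsometryEquiv.neg E).hausdorffMeasure_preimage d A

lemma exists_sphereMeasure_le_polarMeasure (m : ℕ) :
    ∃ C : ℝ≥0∞, C ≠ ⊤ ∧ sphereMeasure m ≤ C • polarMeasure volume := by
  choose C hC hface using hausdorffMeasure_sphere_face_le (m := m)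
  refine ⟨∑ i, (C i + C i), ENNReal.sum_ne_top.2 fun i _ => ENNReal.add_ne_top.2 ⟨hC i, hC i⟩,
    Measure.le_iff.2 fun A hA => ?_⟩
  set D : Fin (m + 1) → Set (Euc (m + 1)) → Set (Euc (m + 1)) :=
    fun i A => {x ∈ A | ‖x‖ = 1 ∧ ∀ j, |x j| ≤ x i}
  have hcover : A ∩ Metric.sphere 0 1 ⊆
      ⋃ i ∈ Finset.univ, (D i A ∪ Neg.neg ⁻¹' D i (Neg.neg ⁻¹' A)) := by
    rintro x ⟨hxA, hxS⟩
    have hx1 : ‖x‖ = 1 := by simpa using hxS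
    obtain ⟨i, -, hi⟩ := Finset.exists_max_image Finset.univ (fun j => |x j|) Finset.univ_nonempty
    refine mem_biUnion (Finset.mem_univ i) ?_
    rcases le_total 0 (x i) with h0 | h0
    · exact Or.inl ⟨hxA, hx1, fun j => by simpa [abs_of_nonneg h0] using hi j (Finset.mem_univ j)⟩
    · refine Or.inr ⟨by simpa using hxA, by simpa using hx1, fun j => ?_⟩
      simpa [abs_of_nonpos h0] using hi j (Finset.mem_univ j)
  rw [sphereMeasure, Measure.restrict_apply hA, Measure.smul_apply, smul_eq_mul, Finset.sum_mul]
  refine ((measure_mono hcover).trans (measure_biUnion_finset_le _ _)).trans ?_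
  refine Finset.sum_le_sum fun i _ => (measure_union_le _ _).trans ?_
  rw [hausdorffMeasure_neg_preimage, add_mul]
  gcongr
  · exact hface i A hA
  · rw [← polarMeasure_neg_preimage volume hA]
    exact hface i _ (measurable_neg hA)

instance : IsFiniteMeasure (sphereMeasure m) := by
  obtain ⟨C, hC, h⟩ := exists_sphereMeasure_le_polarMeasure m
  exact ⟨(h univ).trans_lt (ENNReal.mul_lt_top hC.lt_top (measure_lt_top _ _))⟩

lemma norm_eq_one_ae_sphereMeasure : ∀ᵐ θ ∂(sphereMeasure m), ‖θ‖ = 1 := by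
  filter_upwards [ae_restrict_mem Metric.isClosed_sphere.measurableSet] with θ hθ
  simpa using hθ

lemma measurePreserving_neg_sphereMeasure :
    MeasurePreserving Neg.neg (sphereMeasure m) (sphereMeasure m) := by
  have h : MeasurePreserving Neg.neg
      ((Measure.hausdorffMeasure (m : ℝ)).restrict (Neg.neg ⁻¹' Metric.sphere 0 1))
      (sphereMeasure m) :=
    ((IsometryEquiv.neg (Euc (m + 1))).measurePreserving_hausdorffMeasure
      (m : ℝ)).restrict_preimage Metric.isClosed_sphere.measurableSet
  have hS : Neg.neg ⁻¹' Metric.sphere (0 : Euc (m + 1)) 1 = Metric.sphere 0 1 := by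
    ext x; simp
  rwa [hS] at h

lemma lintegral_le_mul_lintegral_polarMeasure :
    ∃ C : ℝ≥0∞, C ≠ ⊤ ∧ ∀ F : Euc (m + 1) → ℝ≥0∞,
      ∫⁻ θ, F θ ∂(sphereMeasure m) ≤ C * ∫⁻ θ, F θ ∂(polarMeasure volume) := by
  obtain ⟨C, hC, h⟩ := exists_sphereMeasure_le_polarMeasure m
  refine ⟨C, hC, fun F => (lintegral_mono' h le_rfl).trans_eq ?_⟩
  rw [lintegral_smul_measure, smul_eq_mul]

lemma hausdorffMeasure_restrict_sphere (m : ℕ) (c : Euc (m + 1)) {R : ℝ} (hR : 0 < R) :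
    (Measure.hausdorffMeasure (m : ℝ)).restrict (Metric.sphere c R) =
      ENNReal.ofReal (R ^ m) • (sphereMeasure m).map (fun θ => c + R • θ) := by
  have hmeas : Measurable (fun θ : Euc (m + 1) => c + R • θ) := by fun_prop
  ext A hA
  set B := (fun θ : Euc (m + 1) => c + R • θ) ⁻¹' A ∩ Metric.sphere 0 1
  have himage : A ∩ Metric.sphere c R = (c + ·) '' (R • B) := by
    ext x
    constructor
    · rintro ⟨hxA, hxS⟩
      have hx : c + R • (R⁻¹ • (x - c)) = x := by rw [smul_inv_smul₀ hR.ne', add_sub_cancel]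
      refine ⟨_, smul_mem_smul_set ⟨by rwa [mem_preimage, hx], ?_⟩, hx⟩
      rw [mem_sphere_iff_norm] at hxS
      rw [mem_sphere_zero_iff_norm, norm_smul, hxS, norm_inv, Real.norm_of_nonneg hR.le,
        inv_mul_cancel₀ hR.ne']
    · rintro ⟨_, ⟨θ, ⟨hθA, hθS⟩, rfl⟩, rfl⟩
      rw [mem_sphere_zero_iff_norm] at hθS
      exact ⟨hθA, by simp [norm_smul, hθS, abs_of_pos hR]⟩
  rw [Measure.restrict_apply hA, Measure.smul_apply, Measure.map_apply hmeas hA, sphereMeasure,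
    Measure.restrict_apply (hmeas hA), smul_eq_mul, himage,
    (isometry_add_left c).hausdorffMeasure_image (Or.inl (by positivity)),
    Measure.hausdorffMeasure_smul₀ (by positivity) hR.ne', ENNReal.smul_def, smul_eq_mul,
    NNReal.rpow_natCast, ENNReal.coe_pow, ENNReal.ofReal_pow hR.le, ← enorm_eq_nnnorm,
    Real.enorm_of_nonneg hR.le]

end SphereMeasure

section Trace

variable {F : Type*} [NormedAddCommGroup F] [InnerProductSpace ℝ F]

lemma enorm_deriv_norm_sq_le {f : ℝ → F} {f' : F} {t : ℝ} (hf : HasDerivAt f f' t) :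
    ‖deriv (fun t => ‖f t‖ ^ 2) t‖ₑ ≤ ‖f t‖ₑ ^ 2 + ‖f'‖ₑ ^ 2 := by
  have hsum : ‖f t‖ₑ ^ 2 + ‖f'‖ₑ ^ 2 = ENNReal.ofReal (‖f t‖ ^ 2 + ‖f'‖ ^ 2) := by
    rw [ENNReal.ofReal_add (by positivity) (by positivity), ENNReal.ofReal_pow (by positivity),
      ENNReal.ofReal_pow (by positivity), ofReal_norm, ofReal_norm]
  rw [hf.norm_sq.deriv, hsum, ← ofReal_norm]
  refine ENNReal.ofReal_le_ofReal ?_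
  rw [norm_mul, Real.norm_two]
  nlinarith [norm_inner_le_norm (𝕜 := ℝ) (f t) f', sq_nonneg (‖f t‖ - ‖f'‖)]

lemma enorm_sq_le_lintegral_Ioi {f : ℝ → F} (hf : ContDiff ℝ 1 f) (hlim : Tendsto f atTop (nhds 0))
    (a : ℝ) : ‖f a‖ₑ ^ 2 ≤ ∫⁻ t in Ioi a, (‖f t‖ₑ ^ 2 + ‖deriv f t‖ₑ ^ 2) := by
  set I := ∫⁻ t in Ioi a, (‖f t‖ₑ ^ 2 + ‖deriv f t‖ₑ ^ 2)
  have hderiv : ∀ t, ‖deriv (fun t => ‖f t‖ ^ 2) t‖ₑ ≤ ‖f t‖ₑ ^ 2 + ‖deriv f t‖ₑ ^ 2 := fun t =>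
    enorm_deriv_norm_sq_le (hf.differentiable one_ne_zero t).hasDerivAt
  have hbound : ∀ T, a ≤ T → ‖f a‖ₑ ^ 2 ≤ ‖f T‖ₑ ^ 2 + I := by
    intro T haT
    have hvar : ‖‖f T‖ ^ 2 - ‖f a‖ ^ 2‖ₑ ≤ I := by
      refine (enorm_sub_le_lintegral_deriv_of_contDiffOn_Icc
        (hf.norm_sq ℝ).contDiffOn haT).trans ?_
      rw [← restrict_Ioc_eq_restrict_Icc]
      exact lintegral_mono' (Measure.restrict_mono Ioc_subset_Ioi_self le_rfl) hderiv
    calc ‖f a‖ₑ ^ 2 = ‖‖f T‖ ^ 2 - (‖f T‖ ^ 2 - ‖f a‖ ^ 2)‖ₑ := by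
          rw [sub_sub_cancel, enorm_pow, enorm_norm]
      _ ≤ ‖f T‖ₑ ^ 2 + I := by
          refine enorm_sub_le.trans ?_
          rw [enorm_pow, enorm_norm]
          gcongr
  have htend : Tendsto (fun T => ‖f T‖ₑ ^ 2 + I) atTop (nhds (0 + I)) := by
    refine Tendsto.add ?_ tendsto_const_nhds
    simpa [Function.comp_def] using ((ENNReal.continuous_pow 2).tendsto _).comp hlim.enorm
  rw [zero_add] at htend
  exact ge_of_tendsto htend (eventually_atTop.2 ⟨a, hbound⟩)

variable {E : Type*} [NormedAddCommGroup E] [NormedSpace ℝ E]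

/-- The squared `H¹` norm of a differentiable function. -/
def sobolevEnergy {E F : Type*} [NormedAddCommGroup E] [NormedSpace ℝ E] [MeasureSpace E]
    [NormedAddCommGroup F] [NormedSpace ℝ F] (g : E → F) : ℝ≥0∞ :=
  ∫⁻ x, (‖g x‖ₑ ^ 2 + ‖fderiv ℝ g x‖ₑ ^ 2)

lemma tendsto_add_smul_cobounded (c : E) {θ : E} (hθ : θ ≠ 0) :
    Tendsto (fun t : ℝ => c + t • θ) atTop (Bornology.cobounded E) := by
  refine (tendsto_const_add_cobounded c).comp (tendsto_norm_atTop_iff_cobounded.1 ?_)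
  simpa only [norm_smul, Real.norm_eq_abs] using
    tendsto_abs_atTop_atTop.atTop_mul_const (norm_pos_iff.2 hθ)

lemma enorm_sq_ray_le {g : E → F} (hg : ContDiff ℝ 1 g)
    (hlim : Tendsto g (Bornology.cobounded E) (nhds 0)) (c : E) {θ : E} (hθ : ‖θ‖ = 1) (R : ℝ) :
    ‖g (c + R • θ)‖ₑ ^ 2 ≤
      ∫⁻ t in Ioi R, (‖g (c + t • θ)‖ₑ ^ 2 + ‖fderiv ℝ g (c + t • θ)‖ₑ ^ 2) := by
  have hline : ∀ t : ℝ, HasDerivAt (fun t : ℝ => c + t • θ) θ t := fun t => by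
    simpa using ((hasDerivAt_id t).smul_const θ).const_add c
  have hderiv : ∀ t : ℝ, deriv (fun t : ℝ => g (c + t • θ)) t = fderiv ℝ g (c + t • θ) θ :=
    fun t => ((hg.differentiable one_ne_zero _).hasFDerivAt.comp_hasDerivAt t (hline t)).deriv
  have hθ0 : θ ≠ 0 := norm_ne_zero_iff.1 (by simp [hθ])
  refine (enorm_sq_le_lintegral_Ioi (f := fun t => g (c + t • θ)) (hg.comp (by fun_prop))
    (hlim.comp (tendsto_add_smul_cobounded c hθ0)) R).trans ?_
  gcongr with t
  rw [hderiv t]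
  have hθe : ‖θ‖ₑ = 1 := by rw [← ofReal_norm, hθ, ENNReal.ofReal_one]
  simpa only [hθe, mul_one] using (fderiv ℝ g (c + t • θ)).le_opENorm θ

lemma exists_lintegral_sphere_le_sobolevEnergy (m : ℕ) : ∃ C : ℝ≥0∞, C ≠ ⊤ ∧
    ∀ g : Euc (m + 1) → F, ContDiff ℝ 1 g → Tendsto g (Bornology.cobounded _) (nhds 0) →
    ∀ (c : Euc (m + 1)) (R : ℝ), 0 < R →
      ENNReal.ofReal (R ^ m) * ∫⁻ θ, ‖g (c + R • θ)‖ₑ ^ 2 ∂(sphereMeasure m) ≤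
        C * sobolevEnergy g := by
  obtain ⟨C, hC, hle⟩ := lintegral_le_mul_lintegral_polarMeasure (m := m)
  refine ⟨C, hC, fun g hg hlim c R hR => ?_⟩
  set e : Euc (m + 1) → ℝ≥0∞ := fun x => ‖g x‖ₑ ^ 2 + ‖fderiv ℝ g x‖ₑ ^ 2
  have hemeas : Measurable e := by
    have := hg.continuous
    have := hg.continuous_fderiv one_ne_zero
    exact Continuous.measurable (by fun_prop)
  have hray : ∀ θ : Euc (m + 1), ‖θ‖ = 1 → ENNReal.ofReal (R ^ m) * ‖g (c + R • θ)‖ₑ ^ 2 ≤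
      ∫⁻ t in Ioi (0 : ℝ), ENNReal.ofReal (t ^ m) * e (c + t • θ) := by
    intro θ hθ
    calc _ ≤ ENNReal.ofReal (R ^ m) * ∫⁻ t in Ioi R, e (c + t • θ) := by
          gcongr; exact enorm_sq_ray_le hg hlim c hθ R
      _ = ∫⁻ t in Ioi R, ENNReal.ofReal (R ^ m) * e (c + t • θ) := by
          rw [lintegral_const_mul' _ _ ENNReal.ofReal_ne_top]
      _ ≤ ∫⁻ t in Ioi R, ENNReal.ofReal (t ^ m) * e (c + t • θ) := by
          refine setLIntegral_mono' measurableSet_Ioi fun t ht => ?_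
          have : R < t := ht
          gcongr
      _ ≤ _ := lintegral_mono_set (Ioi_subset_Ioi hR.le)
  have hpolar := lintegral_polarMeasure volume (hemeas.comp (measurable_const_add c))
  rw [finrank_euclideanSpace_fin, Nat.add_sub_cancel] at hpolar
  calc _ ≤ C * ∫⁻ θ, ENNReal.ofReal (R ^ m) * ‖g (c + R • θ)‖ₑ ^ 2 ∂(polarMeasure volume) := by
        rw [← lintegral_const_mul' _ _ ENNReal.ofReal_ne_top]; exact hle _
    _ ≤ C * ∫⁻ θ, (∫⁻ t in Ioi (0 : ℝ), ENNReal.ofReal (t ^ m) * e (c + t • θ))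
          ∂(polarMeasure volume) := by
        gcongr 1
        exact lintegral_mono_ae ((norm_eq_one_ae_polarMeasure _).mono hray)
    _ = C * sobolevEnergy g := by
        simp only [Function.comp_def] at hpolar
        rw [hpolar, lintegral_add_left_eq_self e c]
        rfl

end Trace

section EwaldPoint

variable {E : Type*} [NormedAddCommGroup E] [InnerProductSpace ℝ E]

/-- The point of the Ewald sphere `Γ_r(η)` in the direction `-θ` from its centre `η/2`; its
antipode is `ewaldPoint (-r) θ η`. -/
def ewaldPoint (r : ℝ) (θ η : E) : E :=
  (2 : ℝ)⁻¹ • (η - (r * ‖η‖) • θ)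

lemma ewaldPoint_neg (r : ℝ) (θ η : E) :
    ewaldPoint (-r) θ η = (2 : ℝ)⁻¹ • η + (r * ‖η‖ / 2) • θ := by
  simp only [ewaldPoint]
  module

lemma ewaldPoint_neg_direction (r : ℝ) (θ η : E) : ewaldPoint r (-θ) η = ewaldPoint (-r) θ η := by
  simp only [ewaldPoint]
  module

lemma sub_ewaldPoint (r : ℝ) (θ η : E) : η - ewaldPoint r θ η = ewaldPoint (-r) θ η := by
  simp only [ewaldPoint]
  module

lemma continuous_ewaldPoint (r : ℝ) : Continuous fun p : E × E => ewaldPoint r p.1 p.2 := by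
  unfold ewaldPoint
  fun_prop

lemma norm_le_two_mul_norm_ewaldPoint {r : ℝ} (hr : 0 ≤ r) {θ η : E} (h : ⟪η, θ⟫ ≤ 0) :
    ‖η‖ ≤ 2 * ‖ewaldPoint r θ η‖ := by
  have hexp : (2 * ‖ewaldPoint r θ η‖) ^ 2 =
      ‖η‖ ^ 2 - 2 * (r * ‖η‖) * ⟪η, θ⟫ + (r * ‖η‖ * ‖θ‖) ^ 2 := by
    rw [ewaldPoint, norm_smul, Real.norm_of_nonneg (by norm_num), mul_inv_cancel_left₀ two_ne_zero,
      norm_sub_sq_real, real_inner_smul_right, norm_smul, mul_pow, Real.norm_eq_abs, sq_abs]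
    ring
  refine (pow_le_pow_iff_left₀ (norm_nonneg _) (by positivity) two_ne_zero).1 ?_
  have := mul_nonpos_of_nonneg_of_nonpos (mul_nonneg hr (norm_nonneg η)) h
  nlinarith [sq_nonneg (r * ‖η‖ * ‖θ‖)]

-- `η` and `2 • ewaldPoint r θ η` have the same component orthogonal to `θ`.
lemma norm_sq_sub_inner_sq_ewaldPoint (r : ℝ) {θ : E} (hθ : ‖θ‖ = 1) (η : E) :
    ‖ewaldPoint r θ η‖ ^ 2 - ⟪θ, ewaldPoint r θ η⟫ ^ 2 = (‖η‖ ^ 2 - ⟪θ, η⟫ ^ 2) / 4 := by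
  rw [ewaldPoint, norm_smul, mul_pow, norm_sub_sq_real, real_inner_smul_right,
    real_inner_smul_right, inner_sub_right, real_inner_smul_right, real_inner_self_eq_norm_sq,
    norm_smul, Real.norm_eq_abs, Real.norm_eq_abs, hθ, real_inner_comm η θ, mul_pow |r * _|,
    sq_abs, sq_abs]
  ring

lemma norm_sq_sub_inner_sq_ewaldPoint_le (r : ℝ) {θ : E} (hθ : ‖θ‖ = 1) (η : E) :
    ‖ewaldPoint r θ η‖ ^ 2 - ⟪θ, ewaldPoint r θ η⟫ ^ 2 ≤ ‖ewaldPoint (-r) θ η‖ ^ 2 := by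
  rw [norm_sq_sub_inner_sq_ewaldPoint r hθ, ← norm_sq_sub_inner_sq_ewaldPoint (-r) hθ]
  linarith [sq_nonneg ⟪θ, ewaldPoint (-r) θ η⟫]

-- `(‖η‖ - ‖η'‖)(‖η‖ + ‖η'‖) = ⟪η - η', η + η'⟫` controls `‖η‖ - ‖η'‖`, as `⟪η + η', θ⟫ ≤ 0`.
lemma norm_sub_le_mul_norm_ewaldPoint_sub {r : ℝ} (hr : 0 ≤ r) {θ η η' : E} (hθ : ‖θ‖ = 1)
    (h : ⟪η, θ⟫ ≤ 0) (h' : ⟪η', θ⟫ ≤ 0) :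
    ‖η - η'‖ ≤ 2 * (1 + r) * ‖ewaldPoint r θ η - ewaldPoint r θ η'‖ := by
  set k := ‖η‖ - ‖η'‖
  set N := ‖η‖ + ‖η'‖
  set v := (η - η') - (r * k) • θ with hv
  have hdiff : ewaldPoint r θ η - ewaldPoint r θ η' = (2 : ℝ)⁻¹ • v := by
    simp only [ewaldPoint, hv, k]
    module
  have hkN : k * (N - r * ⟪η + η', θ⟫) = ⟪v, η + η'⟫ := by
    simp only [hv, k, N, inner_sub_left, inner_add_right, inner_add_left, real_inner_smul_left,
      real_inner_self_eq_norm_sq, real_inner_comm η' η, real_inner_comm η θ, real_inner_comm η' θ]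
    ring
  have hk : |k| ≤ ‖v‖ := by
    rcases (by positivity : 0 ≤ N).eq_or_lt with hN | hN
    · have : k = 0 := by
        simp only [k, N] at hN ⊢
        linarith [norm_nonneg η, norm_nonneg η']
      rw [this, abs_zero]
      exact norm_nonneg v
    have hsum : r * ⟪η + η', θ⟫ ≤ 0 :=
      mul_nonpos_of_nonneg_of_nonpos hr (by rw [inner_add_left]; linarith)
    refine le_of_mul_le_mul_right ?_ hN
    calc |k| * N ≤ |k| * (N - r * ⟪η + η', θ⟫) := by gcongr; linarith
      _ = |⟪v, η + η'⟫| := by rw [← hkN, abs_mul, abs_of_nonneg (a := N - _) (by linarith)]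
      _ ≤ ‖v‖ * ‖η + η'‖ := abs_real_inner_le_norm _ _
      _ ≤ ‖v‖ * N := by gcongr; exact norm_add_le _ _
  calc ‖η - η'‖ = ‖v + (r * k) • θ‖ := by rw [hv, sub_add_cancel]
    _ ≤ ‖v‖ + r * |k| := by
      refine (norm_add_le _ _).trans_eq ?_
      rw [norm_smul, hθ, Real.norm_eq_abs, abs_mul, abs_of_nonneg hr, mul_one]
    _ ≤ ‖v‖ + r * ‖v‖ := by gcongr
    _ = _ := by
      rw [hdiff, norm_smul, Real.norm_of_nonneg (by norm_num)]
      ring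

lemma setLIntegral_ewaldPoint_le [FiniteDimensional ℝ E] [MeasurableSpace E] [BorelSpace E]
    (μ : Measure E) [μ.IsAddHaarMeasure] {r : ℝ} (hr : 0 ≤ r) {θ : E} (hθ : ‖θ‖ = 1)
    {F : E → ℝ≥0∞} (hF : Measurable F) :
    ∫⁻ η in {η | ⟪η, θ⟫ ≤ 0}, F (ewaldPoint r θ η) ∂μ ≤
      ENNReal.ofReal (2 * (1 + r)) ^ Module.finrank ℝ E * ∫⁻ ζ, F ζ ∂μ := by
  have hmeas : Measurable (ewaldPoint r θ) :=
    ((continuous_ewaldPoint r).comp (Continuous.prodMk_right θ)).measurable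
  refine setLIntegral_comp_le_of_antilipschitz μ hmeas
    (AntilipschitzWith.of_le_mul_dist fun x y => ?_) hF
  rw [Subtype.dist_eq, dist_eq_norm, dist_eq_norm, Real.coe_toNNReal _ (by positivity)]
  exact norm_sub_le_mul_norm_ewaldPoint_sub hr hθ x.2 y.2

lemma lintegral_setLIntegral_ewaldPoint_le [FiniteDimensional ℝ E] [MeasurableSpace E]
    [BorelSpace E] (μ σ : Measure E) [μ.IsAddHaarMeasure] [SFinite σ] (hσ : ∀ᵐ θ ∂σ, ‖θ‖ = 1)
    {r : ℝ} (hr : 0 ≤ r) {W : E → E → ℝ≥0∞} (hW : Measurable (Function.uncurry W)) :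
    ∫⁻ η, ∫⁻ θ in {θ | ⟪η, θ⟫ ≤ 0}, W θ (ewaldPoint r θ η) ∂σ ∂μ ≤
      ENNReal.ofReal (2 * (1 + r)) ^ Module.finrank ℝ E * ∫⁻ ζ, ∫⁻ θ, W θ ζ ∂σ ∂μ := by
  have hset : MeasurableSet {p : E × E | ⟪p.1, p.2⟫ ≤ 0} :=
    measurableSet_le (by fun_prop) measurable_const
  have hmeas : Measurable fun p : E × E =>
      {p : E × E | ⟪p.1, p.2⟫ ≤ 0}.indicator (fun p => W p.2 (ewaldPoint r p.2 p.1)) p :=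
    (hW.comp (measurable_snd.prodMk
      ((continuous_ewaldPoint r).measurable.comp measurable_swap))).indicator hset
  calc ∫⁻ η, ∫⁻ θ in {θ | ⟪η, θ⟫ ≤ 0}, W θ (ewaldPoint r θ η) ∂σ ∂μ
      = ∫⁻ η, ∫⁻ θ, {p : E × E | ⟪p.1, p.2⟫ ≤ 0}.indicator
          (fun p => W p.2 (ewaldPoint r p.2 p.1)) (η, θ) ∂σ ∂μ := by
        exact lintegral_congr fun η =>
          (lintegral_indicator (hset.preimage measurable_prodMk_left) _).symm
    _ = ∫⁻ θ, ∫⁻ η in {η | ⟪η, θ⟫ ≤ 0}, W θ (ewaldPoint r θ η) ∂μ ∂σ := by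
        rw [lintegral_lintegral_swap hmeas.aemeasurable]
        exact lintegral_congr fun θ =>
          lintegral_indicator (hset.preimage measurable_prodMk_right) _
    _ ≤ ∫⁻ θ, ENNReal.ofReal (2 * (1 + r)) ^ Module.finrank ℝ E * ∫⁻ ζ, W θ ζ ∂μ ∂σ := by
        refine lintegral_mono_ae ?_
        filter_upwards [hσ] with θ hθ
        exact setLIntegral_ewaldPoint_le μ hr hθ (hW.comp measurable_prodMk_left)
    _ = _ := by
        rw [lintegral_const_mul' _ _ (by finiteness), lintegral_lintegral_swap hW.aemeasurable]

lemma measurable_setLIntegral_inner_nonpos [MeasurableSpace E] [BorelSpace E]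
    [SecondCountableTopology E] (σ : Measure E) [SFinite σ] {W : E × E → ℝ≥0∞}
    (hW : Measurable W) :
    Measurable fun η => ∫⁻ θ in {θ | ⟪η, θ⟫ ≤ 0}, W (η, θ) ∂σ := by
  have hset : MeasurableSet {p : E × E | ⟪p.1, p.2⟫ ≤ 0} :=
    measurableSet_le (by fun_prop) measurable_const
  have hind : (fun η => ∫⁻ θ in {θ | ⟪η, θ⟫ ≤ 0}, W (η, θ) ∂σ) =
      fun η => ∫⁻ θ, {p : E × E | ⟪p.1, p.2⟫ ≤ 0}.indicator W (η, θ) ∂σ :=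
    funext fun η => (lintegral_indicator (hset.preimage measurable_prodMk_left) _).symm
  exact hind ▸ (hW.indicator hset).lintegral_prod_right'

end EwaldPoint

section SineWeight

open NormedSpace

section Ball

variable {E : Type*} [NormedAddCommGroup E] [NormedSpace ℝ E] [FiniteDimensional ℝ E]
  [Nontrivial E] [MeasurableSpace E] [BorelSpace E] (μ : Measure E) [μ.IsAddHaarMeasure]

lemma setLIntegral_ball_eq_lintegral_polarMeasure {f : E → ℝ≥0∞} (hf : Measurable f) :
    ∫⁻ x in Metric.ball 0 1, f x ∂μ =
      ∫⁻ θ, (∫⁻ t in Ioo (0 : ℝ) 1, ENNReal.ofReal (t ^ (Module.finrank ℝ E - 1)) * f (t • θ))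
        ∂(polarMeasure μ) := by
  rw [← lintegral_indicator Metric.isOpen_ball.measurableSet,
    ← lintegral_polarMeasure μ (hf.indicator Metric.isOpen_ball.measurableSet)]
  refine lintegral_congr_ae ?_
  filter_upwards [norm_eq_one_ae_polarMeasure μ] with θ hθ
  rw [← Iio_inter_Ioi, ← Measure.restrict_restrict measurableSet_Iio,
    ← lintegral_indicator measurableSet_Iio]
  refine setLIntegral_congr_fun measurableSet_Ioi fun t ht => ?_
  have hmem : t • θ ∈ Metric.ball (0 : E) 1 ↔ t ∈ Iio (1 : ℝ) := by
    rw [mem_ball_zero_iff, norm_smul, hθ, mul_one, Real.norm_of_nonneg (le_of_lt ht), mem_Iio]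
  classical
  simp only [indicator_apply, hmem, mul_ite, mul_zero]

lemma lintegral_polarMeasure_le_setLIntegral_ball {f : E → ℝ≥0∞} (hf : Measurable f)
    (hmono : ∀ θ, ‖θ‖ = 1 → ∀ t ∈ Ioo (0 : ℝ) 1, f θ ≤ f (t • θ)) :
    ∫⁻ θ, f θ ∂(polarMeasure μ) ≤ Module.finrank ℝ E * ∫⁻ x in Metric.ball 0 1, f x ∂μ := by
  set d := Module.finrank ℝ E
  have hd : d - 1 + 1 = d := Nat.sub_add_cancel Module.finrank_pos
  have hradial : (d : ℝ≥0∞) * ∫⁻ t in Ioo (0 : ℝ) 1, ENNReal.ofReal (t ^ (d - 1)) = 1 := by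
    have hd0 : (d : ℝ) ≠ 0 := Nat.cast_ne_zero.2 Module.finrank_pos.ne'
    have hcast : ((d - 1 : ℕ) : ℝ) + 1 = d := mod_cast hd
    rw [lintegral_Ioo_ofReal_pow _ zero_le_one, one_pow, hcast, ← ENNReal.ofReal_natCast,
      ← ENNReal.ofReal_mul (Nat.cast_nonneg d), mul_one_div_cancel hd0, ENNReal.ofReal_one]
  rw [setLIntegral_ball_eq_lintegral_polarMeasure μ hf, ← lintegral_const_mul' _ _ (by finiteness)]
  refine lintegral_mono_ae ?_
  filter_upwards [norm_eq_one_ae_polarMeasure μ] with θ hθ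
  rw [← one_mul (f θ), ← hradial, mul_assoc, ← lintegral_mul_const _ (by fun_prop)]
  refine mul_le_mul_right (setLIntegral_mono' measurableSet_Ioo fun t ht => ?_) _
  gcongr
  exact hmono θ hθ t ht

lemma setLIntegral_ball_norm_sq_rpow_neg_ne_top {b : ℝ} (hb : 2 * b < Module.finrank ℝ E) :
    ∫⁻ y in Metric.ball (0 : E) 1, ENNReal.ofReal (‖y‖ ^ 2) ^ (-b) ∂μ ≠ ⊤ := by
  set d := Module.finrank ℝ E
  have hd : ((d - 1 : ℕ) : ℝ) = d - 1 := Nat.cast_pred Module.finrank_pos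
  have hradial : ∀ᵐ θ ∂(polarMeasure μ),
      ∫⁻ t in Ioo (0 : ℝ) 1, ENNReal.ofReal (t ^ (d - 1)) * ENNReal.ofReal (‖t • θ‖ ^ 2) ^ (-b) =
        ∫⁻ t in Ioo (0 : ℝ) 1, ENNReal.ofReal (t ^ (d - 1 - 2 * b)) := by
    filter_upwards [norm_eq_one_ae_polarMeasure μ] with θ hθ
    refine setLIntegral_congr_fun measurableSet_Ioo fun t ht => ?_
    have ht0 : 0 < t := ht.1
    rw [norm_smul, hθ, mul_one, Real.norm_of_nonneg ht0.le,
      ENNReal.ofReal_rpow_of_pos (by positivity), ← ENNReal.ofReal_mul (by positivity),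
      ← Real.rpow_natCast t 2, ← Real.rpow_mul ht0.le, ← Real.rpow_natCast, ← Real.rpow_add ht0, hd]
    congr 2
    push_cast
    ring
  rw [setLIntegral_ball_eq_lintegral_polarMeasure μ (by fun_prop), lintegral_congr_ae hradial,
    lintegral_const]
  have hint : IntegrableOn (fun t : ℝ => t ^ (d - 1 - 2 * b)) (Ioo 0 1) :=
    (intervalIntegral.integrableOn_Ioo_rpow_iff one_pos).2 (by linarith)
  exact ENNReal.mul_ne_top hint.lintegral_lt_top.ne (measure_ne_top _ _)

end Ball

/-- For unit vectors `ω` and `x` at angle `φ` this is `(sin φ)^{-2b}`, with value `∞` at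
`x = ± ω` when `b > 0`. -/
def sineWeight {E : Type*} [NormedAddCommGroup E] [InnerProductSpace ℝ E] (b : ℝ) (ω x : E) :
    ℝ≥0∞ :=
  ENNReal.ofReal (‖x‖ ^ 2 - ⟪ω, x⟫ ^ 2) ^ (-b)

section InnerProductSpace

variable {E : Type*} [NormedAddCommGroup E] [InnerProductSpace ℝ E]

lemma sineWeight_le_sineWeight {b : ℝ} (hb : 0 ≤ b) {ω x ω' x' : E}
    (h : ‖x'‖ ^ 2 - ⟪ω', x'⟫ ^ 2 ≤ ‖x‖ ^ 2 - ⟪ω, x⟫ ^ 2) :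
    sineWeight b ω x ≤ sineWeight b ω' x' := by
  rw [sineWeight, sineWeight, ENNReal.rpow_neg, ENNReal.rpow_neg, ENNReal.inv_le_inv]
  gcongr

lemma sineWeight_le_sineWeight_smul {b : ℝ} (hb : 0 ≤ b) {ω : E} (hω : ‖ω‖ = 1) (x : E) {t : ℝ}
    (ht : t ∈ Ioo 0 1) : sineWeight b ω x ≤ sineWeight b ω (t • x) := by
  refine sineWeight_le_sineWeight hb ?_
  have hinner : ⟪ω, x⟫ ^ 2 ≤ ‖x‖ ^ 2 := by
    simpa [hω] using sq_le_sq' (neg_le_of_abs_le (abs_real_inner_le_norm ω x))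
      (real_inner_le_norm ω x)
  rw [norm_smul, real_inner_smul_right, mul_pow, mul_pow, Real.norm_eq_abs, sq_abs, ← mul_sub]
  exact mul_le_of_le_one_left (by linarith) (pow_le_one₀ ht.1.le ht.2.le)

@[fun_prop]
lemma measurable_sineWeight [MeasurableSpace E] [BorelSpace E] [SecondCountableTopology E] (b : ℝ)
    {X : Type*} [MeasurableSpace X] {f g : X → E} (hf : Measurable f) (hg : Measurable g) :
    Measurable fun x => sineWeight b (f x) (g x) := by
  unfold sineWeight
  fun_prop

lemma setLIntegral_ball_sineWeight_congr [FiniteDimensional ℝ E] [MeasurableSpace E] [BorelSpace E]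
    (b : ℝ) {ω ω' : E} (h : ‖ω‖ = ‖ω'‖) :
    ∫⁻ x in Metric.ball (0 : E) 1, sineWeight b ω x =
      ∫⁻ x in Metric.ball (0 : E) 1, sineWeight b ω' x := by
  set L := Submodule.reflection (Submodule.span ℝ {ω - ω'})ᗮ
  have hL : L ω = ω' := Submodule.reflection_sub h
  have hball : L ⁻¹' Metric.ball 0 1 = Metric.ball 0 1 := by
    ext x
    simp only [mem_preimage, mem_ball_zero_iff, L.norm_map]
  have hpres := L.measurePreserving.restrict_preimage
    (Metric.isOpen_ball (x := (0 : E)) (ε := 1)).measurableSet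
  rw [← hpres.lintegral_comp (f := fun x => sineWeight b ω' x) (by fun_prop), hball]
  simp only [sineWeight, ← hL, L.inner_map_map, L.norm_map]

end InnerProductSpace

variable {m : ℕ}

lemma measurePreserving_euclidean_zero_succ :
    MeasurePreserving fun x : Euc (m + 1) => (x 0, (WithLp.toLp 2 fun j => x j.succ : Euc m)) :=
  ((MeasurePreserving.id volume).prod (PiLp.volume_preserving_toLp (Fin m))).comp
    ((volume_preserving_piFinSuccAbove (fun _ => ℝ) 0).comp
      (PiLp.volume_preserving_ofLp (Fin (m + 1))))

lemma setLIntegral_ball_sineWeight_single_ne_top {b : ℝ} (hb : 0 ≤ b) (hbm : 2 * b < m) :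
    ∫⁻ x in Metric.ball (0 : Euc (m + 1)) 1, sineWeight b (EuclideanSpace.single 0 1) x ≠ ⊤ := by
  have : Nontrivial (Euc m) :=
    Module.nontrivial_of_finrank_pos (R := ℝ) (by
      rw [finrank_euclideanSpace_fin]
      exact_mod_cast (by linarith : (0 : ℝ) < m))
  set tail : Euc (m + 1) → Euc m := fun x => WithLp.toLp 2 fun j => x j.succ with htail
  have hnorm : ∀ x, ‖x‖ ^ 2 = x 0 ^ 2 + ‖tail x‖ ^ 2 := fun x => by
    simp only [htail, EuclideanSpace.real_norm_sq_eq, Fin.sum_univ_succ]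
  set S : Set (ℝ × Euc m) := Ioo (-1) 1 ×ˢ Metric.ball 0 1
  have hS : MeasurableSet S := measurableSet_Ioo.prod Metric.isOpen_ball.measurableSet
  set w : ℝ × Euc m → ℝ≥0∞ := fun p => ENNReal.ofReal (‖p.2‖ ^ 2) ^ (-b)
  have hsub : Metric.ball (0 : Euc (m + 1)) 1 ⊆ (fun x => (x 0, tail x)) ⁻¹' S := by
    intro x hx
    have hx1 : x 0 ^ 2 + ‖tail x‖ ^ 2 < 1 := by
      rw [← hnorm]
      exact pow_lt_one₀ (norm_nonneg x) (mem_ball_zero_iff.1 hx) two_ne_zero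
    refine ⟨abs_lt.1 ((sq_lt_one_iff_abs_lt_one _).1 ?_), mem_ball_zero_iff.2 ?_⟩
    · linarith [sq_nonneg ‖tail x‖]
    · exact (sq_lt_one_iff₀ (norm_nonneg _)).1 (by linarith [sq_nonneg (x 0)])
  refine ne_top_of_le_ne_top ?_ (calc
    _ = ∫⁻ x in Metric.ball (0 : Euc (m + 1)) 1, w (x 0, tail x) := by
      simp only [sineWeight, w, hnorm, EuclideanSpace.inner_single_left, map_one, one_mul,
        add_sub_cancel_left]
    _ ≤ ∫⁻ x in (fun x => (x 0, tail x)) ⁻¹' S, w (x 0, tail x) := lintegral_mono_set hsub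
    _ = ∫⁻ p in S, w p :=
      (measurePreserving_euclidean_zero_succ.restrict_preimage hS).lintegral_comp (by fun_prop)
    _ = ∫⁻ _ in Ioo (-1 : ℝ) 1, ∫⁻ y in Metric.ball (0 : Euc m) 1,
          ENNReal.ofReal (‖y‖ ^ 2) ^ (-b) := by
      rw [Measure.volume_eq_prod, ← Measure.prod_restrict, lintegral_prod _ (by fun_prop)])
  rw [lintegral_const, Measure.restrict_apply_univ, Real.volume_Ioo]
  refine ENNReal.mul_ne_top (setLIntegral_ball_norm_sq_rpow_neg_ne_top volume ?_) (by finiteness)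
  rwa [finrank_euclideanSpace_fin]

lemma exists_lintegral_sineWeight_le {b : ℝ} (hb : 0 ≤ b) (hbm : 2 * b < m) : ∃ C : ℝ≥0∞,
    C ≠ ⊤ ∧ ∀ ω : Euc (m + 1), ‖ω‖ = 1 → ∫⁻ θ, sineWeight b ω θ ∂(sphereMeasure m) ≤ C := by
  obtain ⟨C, hC, hle⟩ := lintegral_le_mul_lintegral_polarMeasure (m := m)
  set K := ∫⁻ x in Metric.ball (0 : Euc (m + 1)) 1, sineWeight b (EuclideanSpace.single 0 1) x
  have hK : K ≠ ⊤ := setLIntegral_ball_sineWeight_single_ne_top hb hbm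
  refine ⟨C * (Module.finrank ℝ (Euc (m + 1)) * K), by finiteness, fun ω hω => ?_⟩
  have hrot : ∫⁻ x in Metric.ball (0 : Euc (m + 1)) 1, sineWeight b ω x = K :=
    setLIntegral_ball_sineWeight_congr b (by simp [hω])
  rw [← hrot]
  refine (hle _).trans ?_
  gcongr
  exact lintegral_polarMeasure_le_setLIntegral_ball volume (by fun_prop) fun θ _ t ht =>
    sineWeight_le_sineWeight_smul hb hω θ ht

end SineWeight

section Bilinear

open NormedSpace

lemma rpow_mul_rpow_neg_sq_le {a β b e z J Z : ℝ} (hb : 0 ≤ b) (hbβ : b ≤ β)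
    (ha : a ≤ 2 * β + 2 * b) (he : 1 ≤ e) (hz : e / 4 ≤ z) (hJ : 1 ≤ J) (hZ : e / 4 ≤ Z) :
    e ^ a * (J ^ (-β) * Z ^ (-β)) ^ 2 ≤ 4 ^ (2 * β + 2 * b) * (J ^ 2 / z ^ 2) ^ (-b) := by
  set y := e / 4 with hy
  have hy0 : 0 < y := by positivity
  have hz0 : 0 < z := hy0.trans_le hz
  have hJ0 : 0 < J := by positivity
  have hZ0 : 0 < Z := hy0.trans_le hZ
  have hsq : ∀ {x : ℝ}, 0 < x → ∀ c : ℝ, (x ^ c) ^ 2 = x ^ (2 * c) := fun hx c => by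
    rw [mul_comm 2 c, Real.rpow_mul hx.le, Real.rpow_ofNat]
  have hquot : (J ^ 2 / z ^ 2) ^ (-b) = J ^ (2 * -b) * z ^ (2 * b) := by
    rw [Real.div_rpow (by positivity) (by positivity), ← Real.rpow_ofNat J 2, ← Real.rpow_ofNat z 2,
      ← Real.rpow_mul hJ0.le, ← Real.rpow_mul hz0.le, mul_neg 2 b, Real.rpow_neg hz0.le,
      div_inv_eq_mul]
  calc e ^ a * (J ^ (-β) * Z ^ (-β)) ^ 2
      = e ^ a * (J ^ (2 * -β) * Z ^ (2 * -β)) := by rw [mul_pow, hsq hJ0, hsq hZ0]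
    _ ≤ e ^ (2 * β + 2 * b) * (J ^ (2 * -b) * y ^ (2 * -β)) := by
      gcongr ?_ * (?_ * ?_)
      · exact Real.rpow_le_rpow_of_exponent_le he ha
      · exact Real.rpow_le_rpow_of_exponent_le hJ (by linarith)
      · exact Real.rpow_le_rpow_of_nonpos hy0 hZ (by linarith)
    _ = 4 ^ (2 * β + 2 * b) * (J ^ (2 * -b) * y ^ (2 * b)) := by
      rw [(by rw [hy]; ring : e = 4 * y), Real.mul_rpow (by norm_num) hy0.le, mul_assoc,
        mul_left_comm (y ^ _), ← Real.rpow_add hy0]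
      ring_nf
    _ ≤ 4 ^ (2 * β + 2 * b) * (J ^ 2 / z ^ 2) ^ (-b) := by
      rw [hquot]
      gcongr

lemma sineWeight_normalize_ge {E : Type*} [NormedAddCommGroup E] [InnerProductSpace ℝ E] {b : ℝ}
    (hb : 0 ≤ b) {ζ θ : E} (hζ : ζ ≠ 0) (hθ : ‖θ‖ = 1) {s : ℝ} (hs : 0 < s)
    (h : ‖ζ‖ ^ 2 - ⟪θ, ζ⟫ ^ 2 ≤ s) :
    ENNReal.ofReal ((s / ‖ζ‖ ^ 2) ^ (-b)) ≤ sineWeight b (normalize ζ) θ := by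
  have hζ0 : 0 < ‖ζ‖ := norm_pos_iff.2 hζ
  rw [← ENNReal.ofReal_rpow_of_pos (by positivity), sineWeight, ENNReal.rpow_neg, ENNReal.rpow_neg,
    ENNReal.inv_le_inv]
  gcongr
  rw [le_div_iff₀ (by positivity), hθ, NormedSpace.normalize, real_inner_smul_left, real_inner_comm]
  refine le_trans (le_of_eq ?_) h
  field_simp

variable {m : ℕ}

/-- The part over the half sphere `⟪η, θ⟫ ≤ 0` of the integral of `u ⊗ v` over the antipodal pairs
of the Ewald sphere; there the argument of `v` has norm at least `‖η‖ / 2`. -/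
def halfEwaldIntegral (r : ℝ) (u v : Euc (m + 1) → ℝ≥0∞) (η : Euc (m + 1)) : ℝ≥0∞ :=
  ∫⁻ θ in {θ | ⟪η, θ⟫ ≤ 0}, u (ewaldPoint (-r) θ η) * v (ewaldPoint r θ η) ∂(sphereMeasure m)

lemma jap_rpow_mul_jap_rpow_ewaldPoint_le {α β b r : ℝ} (hb : 0 ≤ b) (hbβ : b ≤ β)
    (hα : m + 2 * (α - 1) ≤ 2 * β + 2 * b) (hr : 0 ≤ r) {θ η : Euc (m + 1)} (hθ : ‖θ‖ = 1)
    (hη : 1 ≤ ‖η‖) (h : ⟪η, θ⟫ ≤ 0) :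
    ENNReal.ofReal (jap η ^ (2 * (α - 1)) * ‖η‖ ^ m) *
        (ENNReal.ofReal (jap (ewaldPoint (-r) θ η) ^ (-β)) *
          ENNReal.ofReal (jap (ewaldPoint r θ η) ^ (-β))) ^ 2 ≤
      ENNReal.ofReal (4 ^ (2 * β + 2 * b)) * sineWeight b (normalize (ewaldPoint r θ η)) θ := by
  set ξ := ewaldPoint (-r) θ η
  set ζ := ewaldPoint r θ η
  have hjap : 0 < jap η := jap_pos η
  have hlow : jap η / 4 ≤ ‖ζ‖ := by
    linarith [jap_le_two_mul_norm hη, norm_le_two_mul_norm_ewaldPoint hr h]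
  have hsine : ‖ζ‖ ^ 2 - ⟪θ, ζ⟫ ^ 2 ≤ jap ξ ^ 2 :=
    (norm_sq_sub_inner_sq_ewaldPoint_le r hθ η).trans (by gcongr; exact norm_le_jap ξ)
  have hζ : ζ ≠ 0 := norm_pos_iff.1 (by linarith)
  have hξ : 0 < jap ξ := jap_pos ξ
  have hζ' : 0 < jap ζ := jap_pos ζ
  calc _ = ENNReal.ofReal
          (jap η ^ (2 * (α - 1)) * ‖η‖ ^ m * (jap ξ ^ (-β) * jap ζ ^ (-β)) ^ 2) := by
        rw [← ENNReal.ofReal_mul (by positivity), ← ENNReal.ofReal_pow (by positivity),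
          ← ENNReal.ofReal_mul (by positivity)]
    _ ≤ ENNReal.ofReal
          (jap η ^ (m + 2 * (α - 1)) * (jap ξ ^ (-β) * jap ζ ^ (-β)) ^ 2) := by
        rw [Real.rpow_add hjap, Real.rpow_natCast, mul_comm (jap η ^ m)]
        gcongr
        exact norm_le_jap η
    _ ≤ ENNReal.ofReal (4 ^ (2 * β + 2 * b) * (jap ξ ^ 2 / ‖ζ‖ ^ 2) ^ (-b)) :=
        ENNReal.ofReal_le_ofReal (rpow_mul_rpow_neg_sq_le hb hbβ hα (one_le_jap η) hlow
          (one_le_jap ξ) (hlow.trans (norm_le_jap ζ)))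
    _ ≤ _ := by
        rw [ENNReal.ofReal_mul (by positivity)]
        gcongr
        exact sineWeight_normalize_ge hb hζ hθ (by positivity) hsine

lemma measurable_ewaldPoint_left (r : ℝ) (η : Euc (m + 1)) :
    Measurable fun θ => ewaldPoint r θ η :=
  ((continuous_ewaldPoint r).comp (Continuous.prodMk_left η)).measurable

lemma setLIntegral_sq_ewaldPoint_le {f : Euc (m + 1) → ℝ≥0∞} {T : ℝ≥0∞}
    (hT : ∀ (c : Euc (m + 1)) (R : ℝ), 0 < R →
      ENNReal.ofReal (R ^ m) * ∫⁻ θ, f (c + R • θ) ^ 2 ∂(sphereMeasure m) ≤ T)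
    {r : ℝ} (hr : 0 < r) {η : Euc (m + 1)} (hη : η ≠ 0) (A : Set (Euc (m + 1))) :
    ENNReal.ofReal (‖η‖ ^ m) * ∫⁻ θ in A, f (ewaldPoint (-r) θ η) ^ 2 ∂(sphereMeasure m) ≤
      ENNReal.ofReal ((2 / r) ^ m) * T := by
  have hη0 : 0 < ‖η‖ := norm_pos_iff.2 hη
  have hrad : ENNReal.ofReal (‖η‖ ^ m) =
      ENNReal.ofReal ((2 / r) ^ m) * ENNReal.ofReal ((r * ‖η‖ / 2) ^ m) := by
    rw [← ENNReal.ofReal_mul (by positivity), ← mul_pow]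
    congr 2
    field_simp
  rw [hrad, mul_assoc]
  gcongr
  simp only [ewaldPoint_neg]
  exact (mul_le_mul_right (setLIntegral_le_lintegral _ _) _).trans (hT _ _ (by positivity))

lemma mul_setLIntegral_sq_jap_rpow_mul_le {α β b r : ℝ} (hb : 0 ≤ b) (hbβ : b ≤ β)
    (hα : m + 2 * (α - 1) ≤ 2 * β + 2 * b) (hr : 0 ≤ r) (h : Euc (m + 1) → ℝ≥0∞)
    {η : Euc (m + 1)} (hη : 1 ≤ ‖η‖) :
    ENNReal.ofReal (jap η ^ (2 * (α - 1)) * ‖η‖ ^ m) *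
        ∫⁻ θ in {θ | ⟪η, θ⟫ ≤ 0}, (ENNReal.ofReal (jap (ewaldPoint (-r) θ η) ^ (-β)) *
          ENNReal.ofReal (jap (ewaldPoint r θ η) ^ (-β)) * h (ewaldPoint r θ η)) ^ 2
            ∂(sphereMeasure m) ≤
      ENNReal.ofReal (4 ^ (2 * β + 2 * b)) *
        ∫⁻ θ in {θ | ⟪η, θ⟫ ≤ 0}, sineWeight b (normalize (ewaldPoint r θ η)) θ *
          h (ewaldPoint r θ η) ^ 2 ∂(sphereMeasure m) := by
  rw [← lintegral_const_mul' _ _ (by finiteness), ← lintegral_const_mul' _ _ (by finiteness)]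
  refine setLIntegral_mono_ae' (measurableSet_le (by fun_prop) measurable_const) ?_
  filter_upwards [norm_eq_one_ae_sphereMeasure] with θ hθ hθη
  rw [mul_pow, ← mul_assoc, ← mul_assoc]
  exact mul_le_mul_left (jap_rpow_mul_jap_rpow_ewaldPoint_le hb hbβ hα hr hθ hη hθη) _

-- Cauchy–Schwarz with both weights `⟨·⟩^{-β}` put on the factor `h`, where they produce the sine
-- weight; `f` is left for the trace bound `hT`.
lemma mul_sq_halfEwaldIntegral_le {α β b r : ℝ} (hb : 0 ≤ b) (hbβ : b ≤ β)
    (hα : m + 2 * (α - 1) ≤ 2 * β + 2 * b) (hr : 0 < r) {f h : Euc (m + 1) → ℝ≥0∞}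
    (hf : Measurable f) (hh : Measurable h) {T : ℝ≥0∞}
    (hT : ∀ (c : Euc (m + 1)) (R : ℝ), 0 < R →
      ENNReal.ofReal (R ^ m) * ∫⁻ θ, f (c + R • θ) ^ 2 ∂(sphereMeasure m) ≤ T)
    {η : Euc (m + 1)} (hη : 1 ≤ ‖η‖) :
    ENNReal.ofReal (jap η ^ (2 * (α - 1)) * ‖η‖ ^ (2 * m)) *
        halfEwaldIntegral r (fun x => ENNReal.ofReal (jap x ^ (-β)) * f x)
          (fun x => ENNReal.ofReal (jap x ^ (-β)) * h x) η ^ 2 ≤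
      ENNReal.ofReal ((2 / r) ^ m) * T * (ENNReal.ofReal (4 ^ (2 * β + 2 * b)) *
        ∫⁻ θ in {θ | ⟪η, θ⟫ ≤ 0}, sineWeight b (normalize (ewaldPoint r θ η)) θ *
          h (ewaldPoint r θ η) ^ 2 ∂(sphereMeasure m)) := by
  set H : Set (Euc (m + 1)) := {θ | ⟪η, θ⟫ ≤ 0}
  set w : Euc (m + 1) → ℝ≥0∞ := fun θ => ENNReal.ofReal (jap (ewaldPoint (-r) θ η) ^ (-β)) *
    ENNReal.ofReal (jap (ewaldPoint r θ η) ^ (-β))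
  have hjap := jap_pos η
  have hm := measurable_ewaldPoint_left r η
  have hm' := measurable_ewaldPoint_left (-r) η
  have cauchy_schwarz : halfEwaldIntegral r (fun x => ENNReal.ofReal (jap x ^ (-β)) * f x)
      (fun x => ENNReal.ofReal (jap x ^ (-β)) * h x) η ^ 2 ≤
      (∫⁻ θ in H, f (ewaldPoint (-r) θ η) ^ 2 ∂(sphereMeasure m)) *
        ∫⁻ θ in H, (w θ * h (ewaldPoint r θ η)) ^ 2 ∂(sphereMeasure m) := by
    refine le_trans (le_of_eq ?_) (sq_lintegral_mul_le (hf.comp hm').aemeasurable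
      (by fun_prop : Measurable fun θ => w θ * h (ewaldPoint r θ η)).aemeasurable)
    congr 1
    exact lintegral_congr fun θ => by simp only [w]; ring
  have hpow : ENNReal.ofReal (jap η ^ (2 * (α - 1)) * ‖η‖ ^ (2 * m)) =
      ENNReal.ofReal (‖η‖ ^ m) * ENNReal.ofReal (jap η ^ (2 * (α - 1)) * ‖η‖ ^ m) := by
    rw [← ENNReal.ofReal_mul (by positivity), two_mul m, pow_add, mul_left_comm]
  rw [hpow]
  refine (mul_le_mul_right cauchy_schwarz _).trans ?_
  rw [mul_mul_mul_comm]
  exact mul_le_mul'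
    (setLIntegral_sq_ewaldPoint_le hT hr (norm_pos_iff.1 (one_pos.trans_le hη)) H)
    (mul_setLIntegral_sq_jap_rpow_mul_le hb hbβ hα hr.le h hη)

lemma measurable_sineWeight_normalize_mul (b : ℝ) {h : Euc (m + 1) → ℝ≥0∞} (hh : Measurable h) :
    Measurable (Function.uncurry fun θ ζ : Euc (m + 1) =>
      sineWeight b (normalize ζ) θ * h ζ ^ 2) := by
  unfold Function.uncurry NormedSpace.normalize
  fun_prop

lemma lintegral_setLIntegral_sineWeight_le {b : ℝ} {C : ℝ≥0∞}
    (hC : ∀ ω : Euc (m + 1), ‖ω‖ = 1 → ∫⁻ θ, sineWeight b ω θ ∂(sphereMeasure m) ≤ C) {r : ℝ}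
    (hr : 0 ≤ r) {h : Euc (m + 1) → ℝ≥0∞} (hh : Measurable h) :
    ∫⁻ η, ∫⁻ θ in {θ | ⟪η, θ⟫ ≤ 0}, sineWeight b (normalize (ewaldPoint r θ η)) θ *
        h (ewaldPoint r θ η) ^ 2 ∂(sphereMeasure m) ≤
      ENNReal.ofReal (2 * (1 + r)) ^ (m + 1) * (C * ∫⁻ x, h x ^ 2) := by
  refine (lintegral_setLIntegral_ewaldPoint_le volume (sphereMeasure m)
    norm_eq_one_ae_sphereMeasure hr (measurable_sineWeight_normalize_mul b hh)).trans ?_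
  rw [finrank_euclideanSpace_fin, ← lintegral_const_mul C (hh.pow_const 2)]
  refine mul_le_mul_right (lintegral_mono_ae ?_) _
  filter_upwards [compl_mem_ae_iff.2 (measure_singleton (0 : Euc (m + 1)))] with ζ hζ
  rw [lintegral_mul_const _ (by fun_prop)]
  exact mul_le_mul_left (hC _ (norm_normalize hζ)) _

lemma exists_lintegral_sq_halfEwaldIntegral_le {α β b ρ : ℝ} (hb : 0 ≤ b) (hbβ : b ≤ β)
    (hbm : 2 * b < m) (hα : m + 2 * (α - 1) ≤ 2 * β + 2 * b) (hρ : 0 < ρ) (R : ℝ) :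
    ∃ C : ℝ≥0∞, C ≠ ⊤ ∧ ∀ r ∈ Icc ρ R, ∀ f h : Euc (m + 1) → ℝ≥0∞, Measurable f → Measurable h →
      ∀ T : ℝ≥0∞, (∀ (c : Euc (m + 1)) (s : ℝ), 0 < s →
        ENNReal.ofReal (s ^ m) * ∫⁻ θ, f (c + s • θ) ^ 2 ∂(sphereMeasure m) ≤ T) →
      ∫⁻ η in {η | 1 ≤ ‖η‖}, ENNReal.ofReal (jap η ^ (2 * (α - 1)) * ‖η‖ ^ (2 * m)) *
          halfEwaldIntegral r (fun x => ENNReal.ofReal (jap x ^ (-β)) * f x)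
            (fun x => ENNReal.ofReal (jap x ^ (-β)) * h x) η ^ 2 ≤
        C * (T * ∫⁻ x, h x ^ 2) := by
  obtain ⟨S, hS, hsine⟩ := exists_lintegral_sineWeight_le hb hbm
  set A := ENNReal.ofReal ((2 / ρ) ^ m)
  set B := ENNReal.ofReal (4 ^ (2 * β + 2 * b))
  set D := ENNReal.ofReal (2 * (1 + R)) ^ (m + 1)
  refine ⟨A * (B * (D * S)), by finiteness, fun r hr f h hf hh T hT => ?_⟩
  have hr0 : 0 < r := hρ.trans_le hr.1
  have hset : MeasurableSet {η : Euc (m + 1) | 1 ≤ ‖η‖} :=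
    measurableSet_le measurable_const (by fun_prop)
  set I : Euc (m + 1) → ℝ≥0∞ := fun η => ∫⁻ θ in {θ | ⟪η, θ⟫ ≤ 0},
    sineWeight b (normalize (ewaldPoint r θ η)) θ * h (ewaldPoint r θ η) ^ 2 ∂(sphereMeasure m)
  have hI : Measurable I := measurable_setLIntegral_inner_nonpos (sphereMeasure m)
    ((measurable_sineWeight_normalize_mul b hh).comp
      (measurable_snd.prodMk ((continuous_ewaldPoint r).measurable.comp measurable_swap)))
  calc _ ≤ ∫⁻ η in {η | 1 ≤ ‖η‖}, A * T * (B * I η) := by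
        refine setLIntegral_mono' hset fun η hη =>
          (mul_sq_halfEwaldIntegral_le hb hbβ hα hr0 hf hh hT hη).trans ?_
        simp only [A]
        gcongr
        exact hr.1
    _ ≤ A * T * B * ∫⁻ η, I η := by
        rw [← lintegral_const_mul _ hI]
        simpa only [mul_assoc] using setLIntegral_le_lintegral _ _
    _ ≤ A * T * B * (ENNReal.ofReal (2 * (1 + r)) ^ (m + 1) * (S * ∫⁻ x, h x ^ 2)) := by
        gcongr
        exact lintegral_setLIntegral_sineWeight_le hsine hr0.le hh
    _ ≤ A * T * B * (D * (S * ∫⁻ x, h x ^ 2)) := by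
        simp only [D]
        gcongr
        exact hr.2
    _ = _ := by ring

end Bilinear

section Derivative

lemma hasDerivAt_ewaldPoint {E : Type*} [NormedAddCommGroup E] [InnerProductSpace ℝ E] (θ η : E)
    (s : ℝ) : HasDerivAt (fun s => ewaldPoint s θ η) (-((‖η‖ / 2) • θ)) s := by
  have haffine : (fun s => ewaldPoint s θ η) =
      fun s : ℝ => (2 : ℝ)⁻¹ • η - s • ((‖η‖ / 2) • θ) := by
    funext s
    rw [ewaldPoint]
    module
  rw [haffine]
  simpa only [one_smul, id_eq] using
    ((hasDerivAt_id s).smul_const ((‖η‖ / 2) • θ)).const_sub ((2 : ℝ)⁻¹ • η)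

lemma hasDerivAt_ewaldPoint_neg {E : Type*} [NormedAddCommGroup E] [InnerProductSpace ℝ E]
    (θ η : E) (s : ℝ) : HasDerivAt (fun s => ewaldPoint (-s) θ η) ((‖η‖ / 2) • θ) s := by
  simpa only [ewaldPoint_neg_direction, smul_neg, neg_neg] using hasDerivAt_ewaldPoint (-θ) η s

/-- The pointwise `C¹` norm of `Q`. -/
def c1Norm {E F : Type*} [NormedAddCommGroup E] [NormedSpace ℝ E] [NormedAddCommGroup F]
    [NormedSpace ℝ F] (Q : E → F) (x : E) : ℝ≥0∞ :=
  ‖Q x‖ₑ + ‖fderiv ℝ Q x‖ₑ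

lemma enorm_apply_mul_add_mul_apply_neg_le {E : Type*} [NormedAddCommGroup E] [NormedSpace ℝ E]
    (A B : E →L[ℝ] ℂ) (a b : ℂ) (v : E) :
    ‖A v * b + a * B (-v)‖ₑ ≤ ‖v‖ₑ * ((‖a‖ₑ + ‖A‖ₑ) * (‖b‖ₑ + ‖B‖ₑ)) := by
  calc ‖A v * b + a * B (-v)‖ₑ ≤ ‖A‖ₑ * ‖v‖ₑ * ‖b‖ₑ + ‖a‖ₑ * (‖B‖ₑ * ‖v‖ₑ) := by
        refine (enorm_add_le _ _).trans ?_
        rw [enorm_mul, enorm_mul, map_neg, enorm_neg]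
        gcongr <;> exact ContinuousLinearMap.le_opENorm _ _
    _ ≤ ‖A‖ₑ * ‖v‖ₑ * ‖b‖ₑ + ‖a‖ₑ * (‖B‖ₑ * ‖v‖ₑ) + ‖v‖ₑ * (‖a‖ₑ * ‖b‖ₑ + ‖A‖ₑ * ‖B‖ₑ) :=
        le_self_add
    _ = _ := by ring

variable {m : ℕ}

/-- The integral of `Q ⊗ Q` over the antipodal pairs of `Γ_s(η)`, in polar form. -/
def ewaldIntegral (Q : Euc (m + 1) → ℂ) (s : ℝ) (η : Euc (m + 1)) : ℂ :=
  ∫ θ, Q (ewaldPoint (-s) θ η) * Q (ewaldPoint s θ η) ∂(sphereMeasure m)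

/-- The derivative of the integrand of `ewaldIntegral Q s η` in the radius `s`. -/
def ewaldIntegrandDeriv (Q : Euc (m + 1) → ℂ) (s : ℝ) (η θ : Euc (m + 1)) : ℂ :=
  fderiv ℝ Q (ewaldPoint (-s) θ η) ((‖η‖ / 2) • θ) * Q (ewaldPoint s θ η) +
    Q (ewaldPoint (-s) θ η) * fderiv ℝ Q (ewaldPoint s θ η) (-((‖η‖ / 2) • θ))

lemma enorm_ewaldIntegrandDeriv_le (Q : Euc (m + 1) → ℂ) (s : ℝ) (η : Euc (m + 1))
    {θ : Euc (m + 1)} (hθ : ‖θ‖ = 1) :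
    ‖ewaldIntegrandDeriv Q s η θ‖ₑ ≤
      ENNReal.ofReal (‖η‖ / 2) *
        (c1Norm Q (ewaldPoint (-s) θ η) * c1Norm Q (ewaldPoint s θ η)) := by
  have hv : ‖(‖η‖ / 2) • θ‖ₑ = ENNReal.ofReal (‖η‖ / 2) := by
    rw [← ofReal_norm, norm_smul, hθ, mul_one, Real.norm_of_nonneg (by positivity)]
  exact hv ▸ enorm_apply_mul_add_mul_apply_neg_le _ _ _ _ _

lemma enorm_mul_le_c1Norm_mul_c1Norm {E : Type*} [NormedAddCommGroup E] [NormedSpace ℝ E]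
    (Q : E → ℂ) (x y : E) : ‖Q x * Q y‖ₑ ≤ c1Norm Q x * c1Norm Q y := by
  rw [enorm_mul]
  exact mul_le_mul' le_self_add le_self_add

lemma hasDerivAt_ewaldIntegral {Q : Euc (m + 1) → ℂ} (hQ : ContDiff ℝ 1 Q) {M : ℝ≥0∞}
    (hM : M ≠ ⊤) (hQM : ∀ x, c1Norm Q x ≤ M) (η : Euc (m + 1)) (r : ℝ) :
    HasDerivAt (fun s => ewaldIntegral Q s η)
      (∫ θ, ewaldIntegrandDeriv Q r η θ ∂(sphereMeasure m)) r := by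
  have hQc : Continuous Q := hQ.continuous
  have hQ' : Continuous (fderiv ℝ Q) := hQ.continuous_fderiv one_ne_zero
  have hpoint : ∀ s, Continuous fun θ => ewaldPoint s θ η := fun s =>
    (continuous_ewaldPoint s).comp (Continuous.prodMk_left η)
  have hF : ∀ s, Continuous fun θ => Q (ewaldPoint (-s) θ η) * Q (ewaldPoint s θ η) := fun s => by
    have := hpoint s
    have := hpoint (-s)
    fun_prop
  have hprod : ∀ s θ, c1Norm Q (ewaldPoint (-s) θ η) * c1Norm Q (ewaldPoint s θ η) ≤ M * M :=
    fun s θ => mul_le_mul' (hQM _) (hQM _)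
  have hnorm : ∀ {z : ℂ} {K : ℝ≥0∞}, K ≠ ⊤ → ‖z‖ₑ ≤ K → ‖z‖ ≤ K.toReal := fun hK h => by
    simpa only [toReal_enorm] using ENNReal.toReal_mono hK h
  refine (hasDerivAt_integral_of_dominated_loc_of_deriv_le (μ := sphereMeasure m)
    (F' := fun s θ => ewaldIntegrandDeriv Q s η θ)
    (bound := fun _ => (ENNReal.ofReal (‖η‖ / 2) * (M * M)).toReal) univ_mem
    (.of_forall fun s => (hF s).aestronglyMeasurable) ?_ ?_ ?_ (integrable_const _) ?_).2
  · exact .of_bound (hF r).aestronglyMeasurable (M * M).toReal (.of_forall fun θ =>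
      hnorm (by finiteness) ((enorm_mul_le_c1Norm_mul_c1Norm Q _ _).trans (hprod r θ)))
  · have := hpoint r
    have := hpoint (-r)
    unfold ewaldIntegrandDeriv
    exact Continuous.aestronglyMeasurable (by fun_prop)
  · filter_upwards [norm_eq_one_ae_sphereMeasure] with θ hθ s _
    exact hnorm (by finiteness) ((enorm_ewaldIntegrandDeriv_le Q s η hθ).trans
      (mul_le_mul_right (hprod s θ) _))
  · refine .of_forall fun θ s _ => ?_
    have hQd : ∀ x, HasFDerivAt Q (fderiv ℝ Q x) x := fun x =>
      (hQ.differentiable one_ne_zero x).hasFDerivAt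
    exact ((hQd _).comp_hasDerivAt s (hasDerivAt_ewaldPoint_neg θ η s)).mul
      ((hQd _).comp_hasDerivAt s (hasDerivAt_ewaldPoint θ η s))

lemma lintegral_mul_ewaldPoint_le_two_mul_halfEwaldIntegral (r : ℝ) (u : Euc (m + 1) → ℝ≥0∞)
    (η : Euc (m + 1)) :
    ∫⁻ θ, u (ewaldPoint (-r) θ η) * u (ewaldPoint r θ η) ∂(sphereMeasure m) ≤
      2 * halfEwaldIntegral r u u η := by
  set H : Set (Euc (m + 1)) := {θ | ⟪η, θ⟫ ≤ 0}
  have hH : MeasurableSet H := measurableSet_le (by fun_prop) measurable_const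
  have hcompl : Hᶜ ⊆ Neg.neg ⁻¹' H := fun θ hθ => by
    simp only [H, mem_compl_iff, mem_ofPred_eq, not_le, mem_preimage, inner_neg_right] at hθ ⊢
    linarith
  rw [← lintegral_add_compl _ hH, two_mul]
  refine add_le_add_right ((lintegral_mono_set hcompl).trans_eq ?_) _
  rw [halfEwaldIntegral, ← (measurePreserving_neg_sphereMeasure.restrict_preimage
    hH).lintegral_comp_emb (MeasurableEquiv.neg _).measurableEmbedding]
  refine lintegral_congr fun θ => ?_
  rw [ewaldPoint_neg_direction, ewaldPoint_neg_direction, neg_neg, mul_comm]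

lemma Sr_eq_smul_ewaldIntegral {q : Euc (m + 1) → ℂ} (hq : Continuous (ft q)) {s : ℝ} (hs : 0 < s)
    {η : Euc (m + 1)} (hη : η ≠ 0) :
    Sr s q η = (2 / 2 ^ m * ‖η‖ ^ m / ‖η‖) • (s ^ m / (1 + s)) • ewaldIntegral (ft q) s η := by
  have hη0 : 0 < ‖η‖ := norm_pos_iff.2 hη
  have hR : 0 < s * ‖η‖ / 2 := by positivity
  have hdim : ((m + 1 : ℕ) : ℝ) - 1 = m := by
    push_cast
    ring
  rw [Sr, ewaldM, hdim, hausdorffMeasure_restrict_sphere m _ hR, integral_smul_measure,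
    integral_map (by fun_prop) (Continuous.aestronglyMeasurable (by fun_prop)),
    ENNReal.toReal_ofReal (by positivity), smul_smul, smul_smul, ewaldIntegral]
  congr 1
  · rw [div_pow, mul_pow]
    field_simp
  · refine integral_congr_ae (.of_forall fun θ => ?_)
    simp only [← ewaldPoint_neg]
    rw [← neg_neg s, ← sub_ewaldPoint (-s), neg_neg]

lemma hasDerivAt_pow_div_one_add (m : ℕ) {r : ℝ} (hr : 0 ≤ r) :
    HasDerivAt (fun s : ℝ => s ^ m / (1 + s))
      (m * r ^ (m - 1) / (1 + r) - r ^ m / (1 + r) ^ 2) r := by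
  have h := (hasDerivAt_pow m r).div ((hasDerivAt_id r).const_add 1) (by simp only [id]; positivity)
  refine h.congr_deriv ?_
  simp only [id]
  field_simp

lemma abs_pow_div_one_add_le (m : ℕ) {r : ℝ} (hr : 0 ≤ r) :
    |r ^ m / (1 + r)| ≤ (1 + r) ^ m := by
  rw [abs_of_nonneg (by positivity)]
  exact (div_le_self (by positivity) (by linarith)).trans (by gcongr; linarith)

lemma abs_deriv_pow_div_one_add_le (m : ℕ) {r : ℝ} (hr : 0 ≤ r) :
    |m * r ^ (m - 1) / (1 + r) - r ^ m / (1 + r) ^ 2| ≤ (m + 1) * (1 + r) ^ m := by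
  have hpow : r ^ (m - 1) ≤ (1 + r) ^ m :=
    (pow_le_pow_left₀ hr (by linarith) _).trans (pow_le_pow_right₀ (by linarith) (by omega))
  have hpow' : r ^ m ≤ (1 + r) ^ m := pow_le_pow_left₀ hr (by linarith) m
  refine (abs_sub _ _).trans ?_
  rw [abs_of_nonneg (by positivity), abs_of_nonneg (by positivity), add_mul, one_mul]
  refine add_le_add ?_ ?_
  · exact (div_le_self (by positivity) (by linarith)).trans (by gcongr)
  · exact (div_le_self (by positivity) (by nlinarith)).trans hpow'

lemma enorm_ewaldIntegral_le (Q : Euc (m + 1) → ℂ) (r : ℝ) (η : Euc (m + 1)) :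
    ‖ewaldIntegral Q r η‖ₑ ≤ 2 * halfEwaldIntegral r (c1Norm Q) (c1Norm Q) η :=
  ((enorm_integral_le_lintegral_enorm _).trans
    (lintegral_mono fun _ => enorm_mul_le_c1Norm_mul_c1Norm Q _ _)).trans
    (lintegral_mul_ewaldPoint_le_two_mul_halfEwaldIntegral r _ η)

lemma enorm_integral_ewaldIntegrandDeriv_le (Q : Euc (m + 1) → ℂ) (r : ℝ) (η : Euc (m + 1)) :
    ‖∫ θ, ewaldIntegrandDeriv Q r η θ ∂(sphereMeasure m)‖ₑ ≤
      ENNReal.ofReal (‖η‖ / 2) * (2 * halfEwaldIntegral r (c1Norm Q) (c1Norm Q) η) := by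
  refine (enorm_integral_le_lintegral_enorm _).trans (le_trans ?_
    (mul_le_mul_right (lintegral_mul_ewaldPoint_le_two_mul_halfEwaldIntegral r _ η) _))
  rw [← lintegral_const_mul' _ _ ENNReal.ofReal_ne_top]
  refine lintegral_mono_ae ?_
  filter_upwards [norm_eq_one_ae_sphereMeasure] with θ hθ
  exact enorm_ewaldIntegrandDeriv_le Q r η hθ

lemma enorm_smul_integral_ewaldIntegrandDeriv_add_smul_ewaldIntegral_le
    (Q : Euc (m + 1) → ℂ) {r : ℝ} (hr : 0 ≤ r) (η : Euc (m + 1)) :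
    ‖(r ^ m / (1 + r)) • ∫ θ, ewaldIntegrandDeriv Q r η θ ∂(sphereMeasure m) +
        (m * r ^ (m - 1) / (1 + r) - r ^ m / (1 + r) ^ 2) • ewaldIntegral Q r η‖ₑ ≤
      ENNReal.ofReal ((1 + r) ^ m * (‖η‖ + (2 * m + 2))) *
        halfEwaldIntegral r (c1Norm Q) (c1Norm Q) η := by
  set I := halfEwaldIntegral r (c1Norm Q) (c1Norm Q) η
  calc _ ≤ ENNReal.ofReal ((1 + r) ^ m) * (ENNReal.ofReal (‖η‖ / 2) * (2 * I)) +
          ENNReal.ofReal ((m + 1) * (1 + r) ^ m) * (2 * I) := by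
        refine (enorm_add_le _ _).trans ?_
        rw [enorm_smul, enorm_smul, Real.enorm_eq_ofReal_abs, Real.enorm_eq_ofReal_abs]
        gcongr
        · exact abs_pow_div_one_add_le m hr
        · exact enorm_integral_ewaldIntegrandDeriv_le _ r η
        · exact abs_deriv_pow_div_one_add_le m hr
        · exact enorm_ewaldIntegral_le _ r η
    _ = (ENNReal.ofReal ((1 + r) ^ m) * ENNReal.ofReal (‖η‖ / 2) +
          ENNReal.ofReal ((m + 1) * (1 + r) ^ m)) * ENNReal.ofReal 2 * I := by
        rw [ENNReal.ofReal_ofNat]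
        ring
    _ = _ := by
        rw [← ENNReal.ofReal_mul (by positivity), ← ENNReal.ofReal_add (by positivity)
          (by positivity), ← ENNReal.ofReal_mul (by positivity)]
        congr 2
        ring

lemma enorm_deriv_mul_Sr_le {q : Euc (m + 1) → ℂ} (hq : ContDiff ℝ 1 (ft q)) {M : ℝ≥0∞}
    (hM : M ≠ ⊤) (hqM : ∀ x, c1Norm (ft q) x ≤ M) {r : ℝ} (hr : 0 < r) {η : Euc (m + 1)}
    (hη : 1 ≤ ‖η‖) (c : ℂ) :
    ‖deriv (fun s : ℝ => c * Sr s q η) r‖ₑ ≤ ‖c‖ₑ *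
      (ENNReal.ofReal ((4 * m + 6) * (1 + r) ^ m * ‖η‖ ^ m) *
        halfEwaldIntegral r (c1Norm (ft q)) (c1Norm (ft q)) η) := by
  have hη0 : 0 < ‖η‖ := by linarith
  set κ := 2 / 2 ^ m * ‖η‖ ^ m / ‖η‖ with hκ
  have hκ0 : 0 ≤ κ := by positivity
  have hκη : κ * ‖η‖ ≤ 2 * ‖η‖ ^ m := by
    rw [hκ, div_mul_cancel₀ _ hη0.ne']
    gcongr
    exact div_le_self zero_le_two (one_le_pow₀ one_le_two)
  have hSr : (fun s : ℝ => c * Sr s q η) =ᶠ[nhds r]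
      fun s => c * κ • (s ^ m / (1 + s)) • ewaldIntegral (ft q) s η := by
    filter_upwards [lt_mem_nhds hr] with s hs
    rw [Sr_eq_smul_ewaldIntegral hq.continuous hs (norm_pos_iff.1 hη0)]
  have hderiv := ((((hasDerivAt_pow_div_one_add m hr.le).smul
    (hasDerivAt_ewaldIntegral hq hM hqM η r)).const_smul κ).const_mul c).congr_of_eventuallyEq hSr
  rw [hderiv.deriv, enorm_mul, enorm_smul, Real.enorm_of_nonneg hκ0]
  refine mul_le_mul_right ((mul_le_mul_right
    (enorm_smul_integral_ewaldIntegrandDeriv_add_smul_ewaldIntegral_le _ hr.le η) _).trans ?_) _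
  rw [← mul_assoc, ← ENNReal.ofReal_mul hκ0]
  refine mul_le_mul_left (ENNReal.ofReal_le_ofReal ?_) _
  calc κ * ((1 + r) ^ m * (‖η‖ + (2 * m + 2)))
      ≤ κ * ((1 + r) ^ m * (‖η‖ + (2 * m + 2) * ‖η‖)) := by
        gcongr
        exact le_mul_of_one_le_right (by positivity) hη
    _ = (2 * m + 3) * (1 + r) ^ m * (κ * ‖η‖) := by ring
    _ ≤ (2 * m + 3) * (1 + r) ^ m * (2 * ‖η‖ ^ m) := by gcongr
    _ = _ := by ring

end Derivative

section Plancherel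

open scoped FourierTransform LineDeriv SchwartzMap

lemma enorm_le_sum_enorm_apply {E F ι : Type*} [NormedAddCommGroup E] [InnerProductSpace ℝ E]
    [NormedAddCommGroup F] [NormedSpace ℝ F] [Fintype ι] (b : OrthonormalBasis ι ℝ E)
    (L : E →L[ℝ] F) : ‖L‖ₑ ≤ ∑ i, ‖L (b i)‖ₑ := by
  have bound : ‖L‖ ≤ ∑ i, ‖L (b i)‖ := by
    refine L.opNorm_le_bound (by positivity) fun x => ?_
    calc ‖L x‖ = ‖∑ i, b.repr x i • L (b i)‖ := by
          conv_lhs => rw [← b.sum_repr x]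
          simp only [map_sum, map_smul]
      _ ≤ ∑ i, ‖L (b i)‖ * ‖x‖ := norm_sum_le_of_le _ fun i _ => by
          rw [norm_smul, mul_comm, ← b.repr.norm_map x]
          gcongr
          exact PiLp.norm_apply_le (b.repr x) i
      _ = (∑ i, ‖L (b i)‖) * ‖x‖ := (Finset.sum_mul ..).symm
  simpa only [ENNReal.ofReal_sum_of_nonneg fun i _ => norm_nonneg (L (b i)),
    ofReal_norm] using ENNReal.ofReal_le_ofReal bound

lemma enorm_sq_le_card_mul_sum_enorm_apply_sq {E F ι : Type*} [NormedAddCommGroup E]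
    [InnerProductSpace ℝ E] [NormedAddCommGroup F] [NormedSpace ℝ F] [Fintype ι]
    (b : OrthonormalBasis ι ℝ E) (L : E →L[ℝ] F) :
    ‖L‖ₑ ^ 2 ≤ Fintype.card ι * ∑ i, ‖L (b i)‖ₑ ^ 2 :=
  (pow_le_pow_left' (enorm_le_sum_enorm_apply b L) 2).trans
    (sq_sum_le_card_mul_sum_sq_ennreal _)

variable {E H : Type*} [NormedAddCommGroup E] [InnerProductSpace ℝ E] [MeasurableSpace E]
  [BorelSpace E] [NormedAddCommGroup H] [InnerProductSpace ℂ H]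

lemma measurable_enorm_sq_schwartz (g : 𝓢(E, H)) : Measurable fun x => ‖g x‖ₑ ^ 2 :=
  (ENNReal.continuous_pow 2).measurable.comp g.continuous.enorm.measurable

variable [FiniteDimensional ℝ E]

lemma norm_fourierInv_lineDeriv_le (g : 𝓢(E, H)) (v y : E) :
    ‖𝓕⁻ (∂_{v} g) y‖ ≤ 2 * Real.pi * (‖v‖ * ‖y‖ * ‖𝓕⁻ g y‖) := by
  have growth : (fun x : E => ⟪x, v⟫).HasTemperateGrowth := by fun_prop
  have norm_const : ‖-(2 * (Real.pi : ℂ) * Complex.I)‖ = 2 * Real.pi := by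
    simp [abs_of_pos Real.pi_pos]
  rw [SchwartzMap.fourierInv_lineDerivOp_eq, smul_apply,
    SchwartzMap.smulLeftCLM_apply_apply growth, norm_smul, norm_smul, norm_const, mul_comm ‖v‖]
  gcongr
  exact norm_inner_le_norm y v

lemma sobolevEnergy_le_sum_lineDeriv {ι : Type*} [Fintype ι] (b : OrthonormalBasis ι ℝ E)
    (g : 𝓢(E, H)) :
    sobolevEnergy g ≤
      (∫⁻ x, ‖g x‖ₑ ^ 2) + Fintype.card ι * ∑ i, ∫⁻ x, ‖(∂_{b i} g : 𝓢(E, H)) x‖ₑ ^ 2 :=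
  calc sobolevEnergy g
      ≤ ∫⁻ x, (‖g x‖ₑ ^ 2 + Fintype.card ι * ∑ i, ‖(∂_{b i} g : 𝓢(E, H)) x‖ₑ ^ 2) :=
        lintegral_mono fun x =>
          add_le_add_right (enorm_sq_le_card_mul_sum_enorm_apply_sq b (fderiv ℝ g x)) _
    _ = _ := by
        rw [lintegral_add_left (measurable_enorm_sq_schwartz g),
          lintegral_const_mul' _ _ (by finiteness),
          lintegral_finsetSum _ fun i _ => measurable_enorm_sq_schwartz _]

variable [CompleteSpace H]

lemma lintegral_enorm_sq_fourierInv (g : 𝓢(E, H)) :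
    ∫⁻ y, ‖𝓕⁻ g y‖ₑ ^ 2 = ∫⁻ x, ‖g x‖ₑ ^ 2 := by
  have eq_ofReal (h : 𝓢(E, H)) : ∫⁻ x, ‖h x‖ₑ ^ 2 = ENNReal.ofReal (∫ x, ‖h x‖ ^ 2) := by
    rw [ofReal_integral_eq_lintegral_ofReal ((h.memLp 2 volume).integrable_norm_pow two_ne_zero)
      (Eventually.of_forall fun x => by positivity)]
    simp only [ENNReal.ofReal_pow (norm_nonneg _), ofReal_norm]
  rw [eq_ofReal, eq_ofReal, ← SchwartzMap.integral_norm_sq_fourier (𝓕⁻ g),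
    FourierTransform.fourier_fourierInv_eq]

lemma lintegral_enorm_sq_le_of_fourierInv_le {g : 𝓢(E, H)} {w : E → ℝ} {K : ℝ} (hK : 0 ≤ K)
    (h : ∀ y, ‖𝓕⁻ g y‖ ≤ K * w y) :
    ∫⁻ x, ‖g x‖ₑ ^ 2 ≤ ENNReal.ofReal K ^ 2 * ∫⁻ y, ENNReal.ofReal (w y) ^ 2 := by
  rw [← lintegral_enorm_sq_fourierInv, ← lintegral_const_mul' _ _ (by finiteness)]
  refine lintegral_mono fun y => ?_
  rw [← mul_pow, ← ENNReal.ofReal_mul hK, ← ofReal_norm]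
  exact pow_le_pow_left' (ENNReal.ofReal_le_ofReal (h y)) 2

/-- The squared norm `‖(1 + |·|²) 𝓕⁻ g‖²_{L²}` of a Schwartz function `g` on the frequency side,
which controls two derivatives of `g` in `L²`. -/
def momentEnergy (g : 𝓢(E, H)) : ℝ≥0∞ :=
  ∫⁻ y, ENNReal.ofReal ((1 + ‖y‖ ^ 2) * ‖𝓕⁻ g y‖) ^ 2

lemma lintegral_enorm_sq_le_momentEnergy (g : 𝓢(E, H)) : ∫⁻ x, ‖g x‖ₑ ^ 2 ≤ momentEnergy g := by
  have pointwise (y : E) : ‖𝓕⁻ g y‖ ≤ 1 * ((1 + ‖y‖ ^ 2) * ‖𝓕⁻ g y‖) := by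
    nlinarith [norm_nonneg (𝓕⁻ g y), mul_nonneg (sq_nonneg ‖y‖) (norm_nonneg (𝓕⁻ g y))]
  simpa [momentEnergy] using lintegral_enorm_sq_le_of_fourierInv_le zero_le_one pointwise

lemma lintegral_enorm_sq_lineDeriv_le_momentEnergy (g : 𝓢(E, H)) {v : E} (hv : ‖v‖ = 1) :
    ∫⁻ x, ‖(∂_{v} g : 𝓢(E, H)) x‖ₑ ^ 2 ≤ ENNReal.ofReal (2 * Real.pi) ^ 2 * momentEnergy g := by
  refine lintegral_enorm_sq_le_of_fourierInv_le (by positivity) fun y => ?_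
  refine (norm_fourierInv_lineDeriv_le g v y).trans ?_
  rw [hv, one_mul]
  gcongr
  nlinarith [sq_nonneg (‖y‖ - 1)]

lemma lintegral_enorm_sq_lineDeriv_lineDeriv_le_momentEnergy (g : 𝓢(E, H)) {v w : E}
    (hv : ‖v‖ = 1) (hw : ‖w‖ = 1) :
    ∫⁻ x, ‖(∂_{w} (∂_{v} g : 𝓢(E, H)) : 𝓢(E, H)) x‖ₑ ^ 2 ≤
      ENNReal.ofReal ((2 * Real.pi) ^ 2) ^ 2 * momentEnergy g := by
  refine lintegral_enorm_sq_le_of_fourierInv_le (by positivity) fun y => ?_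
  have bound_v := norm_fourierInv_lineDeriv_le g v y
  have bound_w := norm_fourierInv_lineDeriv_le (∂_{v} g : 𝓢(E, H)) w y
  rw [hv, one_mul] at bound_v
  rw [hw, one_mul] at bound_w
  calc ‖𝓕⁻ (∂_{w} (∂_{v} g : 𝓢(E, H)) : 𝓢(E, H)) y‖
      ≤ 2 * Real.pi * (‖y‖ * (2 * Real.pi * (‖y‖ * ‖𝓕⁻ g y‖))) := bound_w.trans (by gcongr)
    _ = (2 * Real.pi) ^ 2 * (‖y‖ ^ 2 * ‖𝓕⁻ g y‖) := by ring
    _ ≤ _ := by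
        gcongr
        linarith

lemma exists_sobolevEnergy_le_momentEnergy {ι : Type*} [Fintype ι] (b : OrthonormalBasis ι ℝ E) :
    ∃ C : ℝ≥0∞, C ≠ ⊤ ∧ ∀ g : 𝓢(E, H), sobolevEnergy g ≤ C * momentEnergy g ∧
      ∀ i, sobolevEnergy (∂_{b i} g : 𝓢(E, H)) ≤ C * momentEnergy g := by
  set N := (Fintype.card ι : ℝ≥0∞) with hN
  set A : ℝ≥0∞ := 1 + ENNReal.ofReal (2 * Real.pi) ^ 2 + ENNReal.ofReal ((2 * Real.pi) ^ 2) ^ 2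
  have of_lintegral_le {g h : 𝓢(E, H)} (h₀ : ∫⁻ x, ‖h x‖ₑ ^ 2 ≤ A * momentEnergy g)
      (h₁ : ∀ i, ∫⁻ x, ‖(∂_{b i} h : 𝓢(E, H)) x‖ₑ ^ 2 ≤ A * momentEnergy g) :
      sobolevEnergy h ≤ (A + N * (N * A)) * momentEnergy g :=
    calc sobolevEnergy h
        ≤ A * momentEnergy g + N * ∑ _i : ι, A * momentEnergy g := by
          refine (sobolevEnergy_le_sum_lineDeriv b h).trans ?_
          gcongr with i
          exact h₁ i
      _ = _ := by
          rw [Finset.sum_const, Finset.card_univ, nsmul_eq_mul, ← hN]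
          ring
  have deriv_le (g : 𝓢(E, H)) (i : ι) :
      ∫⁻ x, ‖(∂_{b i} g : 𝓢(E, H)) x‖ₑ ^ 2 ≤ A * momentEnergy g :=
    (lintegral_enorm_sq_lineDeriv_le_momentEnergy g (b.norm_eq_one i)).trans
      (mul_le_mul_left (le_add_self.trans le_self_add) _)
  refine ⟨A + N * (N * A), by finiteness, fun g =>
    ⟨of_lintegral_le ?_ (deriv_le g), fun i => of_lintegral_le (deriv_le g i) fun j => ?_⟩⟩
  · exact (lintegral_enorm_sq_le_momentEnergy g).trans
      (le_mul_of_one_le_left' (le_self_add.trans le_self_add))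
  · exact (lintegral_enorm_sq_lineDeriv_lineDeriv_le_momentEnergy g (b.norm_eq_one i)
      (b.norm_eq_one j)).trans (mul_le_mul_left le_add_self _)

end Plancherel

section Bessel

open scoped FourierTransform LineDeriv SchwartzMap

variable {n : ℕ}

/-- The Fourier transform `q̂`, in the angular frequency normalization of `ft`, as a Schwartz
function. -/
def ftSchwartz (q : 𝓢(Euc n, ℂ)) : 𝓢(Euc n, ℂ) :=
  SchwartzMap.compCLMOfContinuousLinearEquiv ℂ
    (ContinuousLinearEquiv.smulLeft (Units.mk0 (2 * Real.pi)⁻¹ (by positivity))) (𝓕 q)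

lemma coe_ftSchwartz (q : 𝓢(Euc n, ℂ)) : ⇑(ftSchwartz q) = ft q := by
  funext ξ
  change (𝓕 q) ((2 * Real.pi)⁻¹ • ξ) = ft q ξ
  rw [SchwartzMap.fourier_coe, Real.fourier_eq', ft]
  congr 1 with x
  have phase : -2 * Real.pi * ⟪x, (2 * Real.pi)⁻¹ • ξ⟫ = -⟪ξ, x⟫ := by
    rw [inner_smul_right, real_inner_comm]
    field_simp
  rw [phase, smul_eq_mul]
  push_cast
  ring_nf

/-- The Schwartz function `⟨ξ⟩^β q̂(ξ)`. -/
def besselFt (β : ℝ) (q : 𝓢(Euc n, ℂ)) : 𝓢(Euc n, ℂ) :=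
  SchwartzMap.smulLeftCLM ℂ (fun ξ : Euc n => (1 + ‖ξ‖ ^ 2) ^ (β / 2)) (ftSchwartz q)

lemma besselFt_apply (β : ℝ) (q : 𝓢(Euc n, ℂ)) (ξ : Euc n) :
    besselFt β q ξ = jap ξ ^ β • ft q ξ := by
  rw [besselFt, SchwartzMap.smulLeftCLM_apply_apply
    (Function.hasTemperateGrowth_one_add_norm_sq_rpow (Euc n) (β / 2)), jap_rpow, coe_ftSchwartz]

lemma ft_eq_jap_rpow_smul_besselFt (β : ℝ) (q : 𝓢(Euc n, ℂ)) :
    ft q = fun ξ => jap ξ ^ (-β) • besselFt β q ξ := by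
  funext ξ
  rw [besselFt_apply, smul_smul, ← Real.rpow_add (jap_pos ξ), neg_add_cancel, Real.rpow_zero,
    one_smul]

lemma fourierInv_besselFt (β : ℝ) (q : 𝓢(Euc n, ℂ)) (y : Euc n) :
    𝓕⁻ (besselFt β q) y = (2 * Real.pi) ^ n • besselD β q ((2 * Real.pi) • y) := by
  rw [besselD, smul_inv_smul₀ (by positivity), SchwartzMap.fourierInv_coe, Real.fourierInv_eq']
  congr 1 with ξ
  rw [besselFt_apply, smul_eq_mul, Complex.real_smul, inner_smul_right]
  ring_nf

lemma lintegral_comp_smul {E : Type*} [NormedAddCommGroup E] [NormedSpace ℝ E]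
    [FiniteDimensional ℝ E] [MeasurableSpace E] [BorelSpace E] (μ : Measure E) [μ.IsAddHaarMeasure]
    {a : ℝ} (ha : 0 < a) (F : E → ℝ≥0∞) :
    ENNReal.ofReal (a ^ Module.finrank ℝ E) * ∫⁻ y, F (a • y) ∂μ = ∫⁻ x, F x ∂μ := by
  have embedding := (Homeomorph.smulOfNeZero a ha.ne' (α := E)).measurableEmbedding
  have change_var : ∫⁻ x, F x ∂(μ.map (a • ·)) = ∫⁻ y, F (a • y) ∂μ := embedding.lintegral_map F
  rw [← change_var, Measure.map_addHaar_smul _ ha.ne', lintegral_smul_measure, smul_eq_mul,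
    ← mul_assoc, ← ENNReal.ofReal_mul (by positivity), abs_of_pos (by positivity),
    mul_inv_cancel₀ (by positivity), ENNReal.ofReal_one, one_mul]

lemma momentEnergy_besselFt_le (β : ℝ) (q : 𝓢(Euc n, ℂ)) :
    momentEnergy (besselFt β q) ≤ ENNReal.ofReal ((2 * Real.pi) ^ n) * wSobNorm β 2 q ^ 2 := by
  have pointwise (y : Euc n) : (1 + ‖y‖ ^ 2) * ‖𝓕⁻ (besselFt β q) y‖ ≤
      (2 * Real.pi) ^ n *
        ‖jap ((2 * Real.pi) • y) ^ (2 : ℝ) • besselD β q ((2 * Real.pi) • y)‖ := by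
    have norm_le : ‖y‖ ≤ ‖(2 * Real.pi) • y‖ := by
      rw [norm_smul, Real.norm_of_nonneg (by positivity)]
      nlinarith [norm_nonneg y, Real.pi_gt_three]
    rw [fourierInv_besselFt, norm_smul, norm_smul, Real.norm_of_nonneg (by positivity),
      Real.rpow_two, jap_sq, Real.norm_of_nonneg (by positivity), mul_left_comm]
    gcongr
  rw [wSobNorm, eLpNorm_two_sq, ← lintegral_comp_smul volume Real.two_pi_pos,
    finrank_euclideanSpace, Fintype.card_fin, ← mul_assoc, ← sq, momentEnergy,
    ← lintegral_const_mul' _ _ (by finiteness)]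
  refine lintegral_mono fun y => ?_
  rw [← mul_pow, ← ofReal_norm, ← ENNReal.ofReal_mul (by positivity)]
  exact pow_le_pow_left' (ENNReal.ofReal_le_ofReal (pointwise y)) 2

lemma hasFDerivAt_jap_rpow (s : ℝ) (x : Euc n) :
    HasFDerivAt (fun y : Euc n => jap y ^ s) ((s * jap x ^ (s - 2)) • innerSL ℝ x) x := by
  have pos : 0 < 1 + ‖x‖ ^ 2 := by positivity
  have hasDeriv := ((hasStrictFDerivAt_norm_sq x).hasFDerivAt.const_add 1).rpow_const
    (p := s / 2) (Or.inl pos.ne')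
  simp only [jap_rpow]
  refine hasDeriv.congr_fderiv ?_
  rw [← Nat.cast_smul_eq_nsmul ℝ, smul_smul]
  push_cast
  ring_nf

lemma norm_fderiv_jap_rpow_le (s : ℝ) (x : Euc n) :
    ‖fderiv ℝ (fun y : Euc n => jap y ^ s) x‖ ≤ |s| * jap x ^ s := by
  have jap_pos := jap_pos x
  rw [(hasFDerivAt_jap_rpow s x).fderiv, norm_smul, innerSL_apply_norm, norm_mul, Real.norm_eq_abs,
    Real.norm_of_nonneg (by positivity), mul_assoc]
  gcongr
  calc jap x ^ (s - 2) * ‖x‖ ≤ jap x ^ (s - 2) * jap x ^ (2 : ℝ) := by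
        rw [Real.rpow_two]
        gcongr
        nlinarith [norm_le_jap x, one_le_jap x]
    _ = jap x ^ s := by rw [← Real.rpow_add jap_pos, sub_add_cancel]

lemma c1Norm_jap_rpow_smul_le {F : Type*} [NormedAddCommGroup F] [NormedSpace ℝ F] (s : ℝ)
    {G : Euc n → F} (hG : Differentiable ℝ G) (x : Euc n) :
    c1Norm (fun y => jap y ^ s • G y) x ≤
      ENNReal.ofReal (jap x ^ s) * (ENNReal.ofReal (1 + |s|) * c1Norm G x) := by
  have jap_nonneg : 0 ≤ jap x ^ s := Real.rpow_nonneg (jap_pos x).le s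
  have fderiv_le : ‖fderiv ℝ (fun y => jap y ^ s • G y) x‖ ≤
      jap x ^ s * ‖fderiv ℝ G x‖ + |s| * jap x ^ s * ‖G x‖ := by
    rw [fderiv_fun_smul (hasFDerivAt_jap_rpow s x).differentiableAt (hG x)]
    refine norm_add_le_of_le ?_ ?_
    · rw [norm_smul, Real.norm_of_nonneg jap_nonneg]
    · rw [ContinuousLinearMap.norm_smulRight_apply]
      gcongr
      exact norm_fderiv_jap_rpow_le s x
  simp only [c1Norm, ← ofReal_norm]
  rw [← ENNReal.ofReal_add (norm_nonneg _) (norm_nonneg _),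
    ← ENNReal.ofReal_add (norm_nonneg _) (norm_nonneg _), ← ENNReal.ofReal_mul (by positivity),
    ← ENNReal.ofReal_mul jap_nonneg]
  refine ENNReal.ofReal_le_ofReal ?_
  rw [norm_smul, Real.norm_of_nonneg jap_nonneg]
  have spare : 0 ≤ |s| * (jap x ^ s * ‖fderiv ℝ G x‖) := by positivity
  linarith

lemma c1Norm_ft_le (β : ℝ) (q : 𝓢(Euc n, ℂ)) (ξ : Euc n) :
    c1Norm (ft q) ξ ≤
      ENNReal.ofReal (jap ξ ^ (-β)) * (ENNReal.ofReal (1 + |β|) * c1Norm (besselFt β q) ξ) := by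
  rw [ft_eq_jap_rpow_smul_besselFt β q, ← abs_neg β]
  exact c1Norm_jap_rpow_smul_le (-β) (besselFt β q).differentiable ξ

lemma exists_c1Norm_le {E F : Type*} [NormedAddCommGroup E] [NormedSpace ℝ E]
    [NormedAddCommGroup F] [NormedSpace ℝ F] (G : 𝓢(E, F)) :
    ∃ M : ℝ≥0∞, M ≠ ⊤ ∧ ∀ x, c1Norm G x ≤ M := by
  obtain ⟨A, hA⟩ := G.decay 0 0
  obtain ⟨B, hB⟩ := G.decay 0 1
  refine ⟨ENNReal.ofReal A + ENNReal.ofReal B, by finiteness, fun x => add_le_add ?_ ?_⟩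
  · simpa [← ofReal_norm] using ENNReal.ofReal_le_ofReal (hA.2 x)
  · simpa [← ofReal_norm, norm_iteratedFDeriv_one] using ENNReal.ofReal_le_ofReal (hB.2 x)

end Bessel

section WeightedEstimate

open scoped LineDeriv SchwartzMap

lemma measurable_c1Norm {E F : Type*} [NormedAddCommGroup E] [NormedSpace ℝ E] [MeasurableSpace E]
    [BorelSpace E] [NormedAddCommGroup F] [NormedSpace ℝ F] {G : E → F} (hG : ContDiff ℝ 1 G) :
    Measurable (c1Norm G) :=
  (hG.continuous.enorm.add (hG.continuous_fderiv one_ne_zero).enorm).measurable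

lemma lintegral_sq_c1Norm_le {E F : Type*} [NormedAddCommGroup E] [NormedSpace ℝ E]
    [MeasureSpace E] [NormedAddCommGroup F] [NormedSpace ℝ F] (G : E → F) :
    ∫⁻ x, c1Norm G x ^ 2 ≤ 2 * sobolevEnergy G := by
  rw [sobolevEnergy, ← lintegral_const_mul' _ _ (by finiteness)]
  exact lintegral_mono fun x => add_sq_le_two_mul_ennreal _ _

variable {m : ℕ}

lemma exists_lintegral_sphere_sq_c1Norm_le (m : ℕ) : ∃ C : ℝ≥0∞, C ≠ ⊤ ∧
    ∀ (G : 𝓢(Euc (m + 1), ℂ)) (c : Euc (m + 1)) (R : ℝ), 0 < R →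
      ENNReal.ofReal (R ^ m) * ∫⁻ θ, c1Norm G (c + R • θ) ^ 2 ∂sphereMeasure m ≤
        C * momentEnergy G := by
  obtain ⟨A, hA, trace⟩ := exists_lintegral_sphere_le_sobolevEnergy (F := ℂ) m
  set b := EuclideanSpace.basisFun (Fin (m + 1)) ℝ
  obtain ⟨B, hB, energy_le⟩ := exists_sobolevEnergy_le_momentEnergy (H := ℂ) b
  set N := (Fintype.card (Fin (m + 1)) : ℝ≥0∞) with hN
  refine ⟨2 * (A * B + N * (N * (A * B))), by finiteness, fun G c R hR => ?_⟩
  set M := momentEnergy G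
  have sphere_le {g : 𝓢(Euc (m + 1), ℂ)} (hg : sobolevEnergy g ≤ B * M) :
      ENNReal.ofReal (R ^ m) * ∫⁻ θ, ‖g (c + R • θ)‖ₑ ^ 2 ∂sphereMeasure m ≤ A * B * M := by
    refine (trace g (g.smooth 1) ?_ c R hR).trans ?_
    · rw [Metric.cobounded_eq_cocompact]
      exact zero_at_infty g
    · rw [mul_assoc]
      exact mul_le_mul_right hg A
  have measurable_comp (g : 𝓢(Euc (m + 1), ℂ)) : Measurable fun θ => ‖g (c + R • θ)‖ₑ ^ 2 :=
    (measurable_enorm_sq_schwartz g).comp (by fun_prop)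
  have pointwise (x : Euc (m + 1)) : c1Norm G x ^ 2 ≤
      2 * (‖G x‖ₑ ^ 2 + N * ∑ i, ‖(∂_{b i} G : 𝓢(Euc (m + 1), ℂ)) x‖ₑ ^ 2) :=
    (add_sq_le_two_mul_ennreal _ _).trans (mul_le_mul_right (add_le_add_right
      (enorm_sq_le_card_mul_sum_enorm_apply_sq b (fderiv ℝ G x)) _) 2)
  calc ENNReal.ofReal (R ^ m) * ∫⁻ θ, c1Norm G (c + R • θ) ^ 2 ∂sphereMeasure m
      ≤ ENNReal.ofReal (R ^ m) * ∫⁻ θ, 2 * (‖G (c + R • θ)‖ₑ ^ 2 +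
          N * ∑ i, ‖(∂_{b i} G : 𝓢(Euc (m + 1), ℂ)) (c + R • θ)‖ₑ ^ 2) ∂sphereMeasure m :=
        mul_le_mul_right (lintegral_mono fun θ => pointwise _) _
    _ = 2 * (ENNReal.ofReal (R ^ m) * (∫⁻ θ, ‖G (c + R • θ)‖ₑ ^ 2 ∂sphereMeasure m) +
          N * ∑ i, ENNReal.ofReal (R ^ m) *
            ∫⁻ θ, ‖(∂_{b i} G : 𝓢(Euc (m + 1), ℂ)) (c + R • θ)‖ₑ ^ 2 ∂sphereMeasure m) := by
        rw [lintegral_const_mul' _ _ (by finiteness), lintegral_add_left (measurable_comp G),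
          lintegral_const_mul' _ _ (by finiteness),
          lintegral_finsetSum _ fun i _ => measurable_comp _, ← Finset.mul_sum]
        ring
    _ ≤ 2 * (A * B * M + N * ∑ _i : Fin (m + 1), A * B * M) :=
        mul_le_mul_right (add_le_add (sphere_le (energy_le G).1) (mul_le_mul_right
          (Finset.sum_le_sum fun i _ => sphere_le ((energy_le G).2 i)) _)) 2
    _ = _ := by
        rw [Finset.sum_const, Finset.card_univ, nsmul_eq_mul, ← hN]
        ring

lemma halfEwaldIntegral_mono {u u' v v' : Euc (m + 1) → ℝ≥0∞} (hu : u ≤ u') (hv : v ≤ v') (r : ℝ)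
    (η : Euc (m + 1)) : halfEwaldIntegral r u v η ≤ halfEwaldIntegral r u' v' η :=
  lintegral_mono fun _ => mul_le_mul' (hu _) (hv _)

lemma exists_lintegral_sq_halfEwaldIntegral_ft_le {α β b ρ : ℝ} (hb : 0 ≤ b) (hbβ : b ≤ β)
    (hbm : 2 * b < m) (hα : m + 2 * (α - 1) ≤ 2 * β + 2 * b) (hρ : 0 < ρ) (R : ℝ) :
    ∃ C : ℝ≥0∞, C ≠ ⊤ ∧ ∀ r ∈ Icc ρ R, ∀ q : 𝓢(Euc (m + 1), ℂ),
      ∫⁻ η in {η : Euc (m + 1) | 1 ≤ ‖η‖}, ENNReal.ofReal (jap η ^ (2 * (α - 1)) * ‖η‖ ^ (2 * m)) *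
        halfEwaldIntegral r (c1Norm (ft q)) (c1Norm (ft q)) η ^ 2 ≤
      C * (wSobNorm β 2 q ^ 2) ^ 2 := by
  obtain ⟨A, hA, bilinear⟩ := exists_lintegral_sq_halfEwaldIntegral_le hb hbβ hbm hα hρ R
  obtain ⟨B, hB, trace⟩ := exists_lintegral_sphere_sq_c1Norm_le m
  obtain ⟨D, hD, energy_le⟩ := exists_sobolevEnergy_le_momentEnergy (H := ℂ)
    (EuclideanSpace.basisFun (Fin (m + 1)) ℝ)
  set K := ENNReal.ofReal (1 + |β|)
  set P := ENNReal.ofReal ((2 * Real.pi) ^ (m + 1))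
  refine ⟨A * (K ^ 2 * B * (K ^ 2 * (2 * D))) * P ^ 2, by finiteness, fun r hr q => ?_⟩
  set G := besselFt β q
  set f := fun x => K * c1Norm G x
  have measurable_f : Measurable f := (measurable_c1Norm (G.smooth 1)).const_mul K
  have sphere_le (c : Euc (m + 1)) (s : ℝ) (hs : 0 < s) :
      ENNReal.ofReal (s ^ m) * ∫⁻ θ, f (c + s • θ) ^ 2 ∂sphereMeasure m ≤
        K ^ 2 * (B * momentEnergy G) := by
    simp only [f, mul_pow]
    rw [lintegral_const_mul' _ _ (by finiteness), mul_left_comm]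
    exact mul_le_mul_right (trace G c s hs) _
  have lintegral_le : ∫⁻ x, f x ^ 2 ≤ K ^ 2 * (2 * (D * momentEnergy G)) := by
    simp only [f, mul_pow]
    rw [lintegral_const_mul' _ _ (by finiteness)]
    exact mul_le_mul_right ((lintegral_sq_c1Norm_le G).trans
      (mul_le_mul_right (energy_le G).1 2)) _
  calc _ ≤ ∫⁻ η in {η : Euc (m + 1) | 1 ≤ ‖η‖},
          ENNReal.ofReal (jap η ^ (2 * (α - 1)) * ‖η‖ ^ (2 * m)) *
            halfEwaldIntegral r (fun x => ENNReal.ofReal (jap x ^ (-β)) * f x)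
              (fun x => ENNReal.ofReal (jap x ^ (-β)) * f x) η ^ 2 :=
        lintegral_mono fun η => mul_le_mul_right (pow_le_pow_left'
          (halfEwaldIntegral_mono (c1Norm_ft_le β q) (c1Norm_ft_le β q) r η) 2) _
    _ ≤ A * (K ^ 2 * (B * momentEnergy G) * ∫⁻ x, f x ^ 2) :=
        bilinear r hr f f measurable_f measurable_f _ sphere_le
    _ ≤ A * (K ^ 2 * (B * momentEnergy G) * (K ^ 2 * (2 * (D * momentEnergy G)))) := by gcongr
    _ = A * (K ^ 2 * B * (K ^ 2 * (2 * D))) * momentEnergy G ^ 2 := by ring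
    _ ≤ A * (K ^ 2 * B * (K ^ 2 * (2 * D))) * (P * wSobNorm β 2 q ^ 2) ^ 2 :=
        mul_le_mul_right (pow_le_pow_left' (momentEnergy_besselFt_le β q) 2) _
    _ = _ := by ring

lemma enorm_sq_jap_rpow_smul_deriv_mul_Sr_le (q : 𝓢(Euc (m + 1), ℂ)) {r R : ℝ} (hr : 0 < r)
    (hrR : r ≤ R) (α : ℝ) {η : Euc (m + 1)} (hη : 1 ≤ ‖η‖) {c : ℂ} (hc : ‖c‖ ≤ 1) :
    ‖jap η ^ (α - 1) • deriv (fun s : ℝ => c * Sr s q η) r‖ₑ ^ 2 ≤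
      ENNReal.ofReal ((4 * m + 6) * (1 + R) ^ m) ^ 2 *
        (ENNReal.ofReal (jap η ^ (2 * (α - 1)) * ‖η‖ ^ (2 * m)) *
          halfEwaldIntegral r (c1Norm (ft q)) (c1Norm (ft q)) η ^ 2) := by
  obtain ⟨M, hM, hqM⟩ := exists_c1Norm_le (ftSchwartz q)
  have smooth_ft : ContDiff ℝ 1 (ft q) := coe_ftSchwartz q ▸ (ftSchwartz q).smooth 1
  rw [coe_ftSchwartz] at hqM
  set I := halfEwaldIntegral r (c1Norm (ft q)) (c1Norm (ft q)) η
  have jap_pos := jap_pos η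
  have R_pos := hr.trans_le hrR
  have deriv_le : ‖deriv (fun s : ℝ => c * Sr s q η) r‖ₑ ≤
      ENNReal.ofReal ((4 * m + 6) * (1 + R) ^ m * ‖η‖ ^ m) * I :=
    calc _ ≤ ‖c‖ₑ * (ENNReal.ofReal ((4 * m + 6) * (1 + r) ^ m * ‖η‖ ^ m) * I) :=
          enorm_deriv_mul_Sr_le smooth_ft hM hqM hr hη c
      _ ≤ 1 * (ENNReal.ofReal ((4 * m + 6) * (1 + R) ^ m * ‖η‖ ^ m) * I) := by
          gcongr
          rw [← ofReal_norm]
          exact ENNReal.ofReal_le_one.2 hc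
      _ = _ := one_mul _
  have weight_eq : jap η ^ (2 * (α - 1)) * ‖η‖ ^ (2 * m) = (jap η ^ (α - 1) * ‖η‖ ^ m) ^ 2 := by
    rw [mul_pow, ← Real.rpow_mul_natCast jap_pos.le, ← pow_mul, mul_comm m]
    push_cast
    ring_nf
  rw [enorm_smul, ← ofReal_norm (jap η ^ (α - 1)), Real.norm_of_nonneg (by positivity), weight_eq,
    ENNReal.ofReal_pow (by positivity), ← mul_pow, ← mul_pow, ← mul_assoc (ENNReal.ofReal _),
    ← ENNReal.ofReal_mul (by positivity)]
  refine pow_le_pow_left' ((mul_le_mul_right deriv_le _).trans_eq ?_) 2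
  rw [← mul_assoc, ← ENNReal.ofReal_mul (by positivity)]
  ring_nf

lemma exists_eLpNorm_deriv_mul_Sr_le {α β b ρ : ℝ} (hb : 0 ≤ b) (hbβ : b ≤ β)
    (hbm : 2 * b < m) (hα : m + 2 * (α - 1) ≤ 2 * β + 2 * b) (hρ : 0 < ρ) (R : ℝ) :
    ∃ C : ℝ, 0 < C ∧ ∀ χ : Euc (m + 1) → ℂ, (∀ ξ, ‖χ ξ‖ ≤ 1) → (∀ ξ, ‖ξ‖ < 1 → χ ξ = 0) →
      ∀ q : 𝓢(Euc (m + 1), ℂ), ∀ r ∈ Icc ρ R,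
        eLpNorm (fun η => jap η ^ (α - 1) • deriv (fun s : ℝ => χ η * Sr s q η) r) 2 volume ≤
          ENNReal.ofReal C * wSobNorm β 2 q ^ 2 := by
  obtain ⟨A, hA, bilinear⟩ := exists_lintegral_sq_halfEwaldIntegral_ft_le hb hbβ hbm hα hρ R
  set K := ENNReal.ofReal ((4 * m + 6) * (1 + R) ^ m)
  have ofReal_const : ENNReal.ofReal (1 + (K ^ 2 * A).toReal) = 1 + K ^ 2 * A := by
    rw [ENNReal.ofReal_add zero_le_one (by positivity), ENNReal.ofReal_one,
      ENNReal.ofReal_toReal (by finiteness)]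
  refine ⟨1 + (K ^ 2 * A).toReal, by positivity, fun χ hχ hχ0 q r hr => ?_⟩
  rw [ofReal_const]
  refine eLpNorm_two_le_of_lintegral_sq_le ?_
  have measurableSet_region : MeasurableSet {η : Euc (m + 1) | 1 ≤ ‖η‖} :=
    measurableSet_le measurable_const measurable_norm
  calc ∫⁻ η, ‖jap η ^ (α - 1) • deriv (fun s : ℝ => χ η * Sr s q η) r‖ₑ ^ 2
      = ∫⁻ η in {η : Euc (m + 1) | 1 ≤ ‖η‖},
          ‖jap η ^ (α - 1) • deriv (fun s : ℝ => χ η * Sr s q η) r‖ₑ ^ 2 := by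
        refine (setLIntegral_eq_of_support_subset fun η hη => ?_).symm
        contrapose! hη
        simp [hχ0 η (not_le.1 hη)]
    _ ≤ ∫⁻ η in {η : Euc (m + 1) | 1 ≤ ‖η‖},
          K ^ 2 * (ENNReal.ofReal (jap η ^ (2 * (α - 1)) * ‖η‖ ^ (2 * m)) *
            halfEwaldIntegral r (c1Norm (ft q)) (c1Norm (ft q)) η ^ 2) :=
        setLIntegral_mono' measurableSet_region fun η hη =>
          enorm_sq_jap_rpow_smul_deriv_mul_Sr_le q (hρ.trans_le hr.1) hr.2 α hη (hχ η)
    _ ≤ K ^ 2 * (A * (wSobNorm β 2 q ^ 2) ^ 2) := by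
        rw [lintegral_const_mul' _ _ (by finiteness)]
        exact mul_le_mul_right (bilinear r hr q) _
    _ ≤ ((1 + K ^ 2 * A) * wSobNorm β 2 q ^ 2) ^ 2 := by
        rw [← mul_assoc, mul_pow]
        exact mul_le_mul_left (le_add_self.trans (le_self_pow₀ le_self_add two_ne_zero)) _

end WeightedEstimate

theorem stmt7_general (n : ℕ) (hn : 2 ≤ n) (ρ R : ℝ) (hρ : 0 < ρ) (β α : ℝ) (hβ : 0 ≤ β)
    (hrange : (β < ((n : ℝ) - 1) / 2 ∧ α ≤ 2 * β - ((n : ℝ) - 3) / 2) ∨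
      (((n : ℝ) - 1) / 2 ≤ β ∧ α < β + 1)) :
    ∃ C : ℝ, 0 < C ∧ ∀ χ : Euc n → ℂ, (∀ ξ, ‖χ ξ‖ ≤ 1) → (∀ ξ, ‖ξ‖ < 1 → χ ξ = 0) →
      ∀ (q : SchwartzMap (Euc n) ℂ), ∀ r ∈ Icc ρ R,
        eLpNorm (fun η => jap η ^ (α - 1) • deriv (fun s : ℝ => χ η * Sr s q η) r) 2 volume ≤
          ENNReal.ofReal C * wSobNorm β 2 q ^ 2 := by
  obtain ⟨m, rfl⟩ := Nat.exists_eq_add_of_le' (one_le_two.trans hn)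
  have m_pos : (0 : ℝ) < m := by exact_mod_cast Nat.succ_le_succ_iff.1 hn
  push_cast at hrange
  rcases hrange with ⟨hβm, hα⟩ | ⟨hβm, hα⟩
  · exact exists_eLpNorm_deriv_mul_Sr_le hβ le_rfl (by linarith) (by linarith) hρ R
  · set ε := min ((m : ℝ) / 2) (β + 1 - α)
    have ε_pos : 0 < ε := lt_min (by linarith) (by linarith)
    have ε_le : ε ≤ m / 2 := min_le_left _ _
    have ε_le' : ε ≤ β + 1 - α := min_le_right _ _
    exact exists_eLpNorm_deriv_mul_Sr_le (b := m / 2 - ε) (by linarith) (by linarith)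
      (by linarith) (by linarith) hρ R

/-- weighted `L²_{α-1}` estimate for `∂_r(χ·S_r(q))` for `r ∈ (1-δ, 1+δ)`. -/
theorem stmt7 (n : ℕ) (hn : 2 ≤ n) (δ : ℝ) (hδ0 : 0 < δ) (hδ1 : δ < 1)
    (β α : ℝ) (hβ : 0 ≤ β)
    (hrange : (((n : ℝ) - 3) / 2 < β ∧ β < ((n : ℝ) - 1) / 2 ∧
        α ≤ 2 * β - ((n : ℝ) - 3) / 2) ∨
      (((n : ℝ) - 1) / 2 ≤ β ∧ α < β + 1))
    (C₀ : ℝ) (hC₀ : 1 ≤ C₀) (χ : Euc n → ℝ) (hχsm : ContDiff ℝ (⊤ : ℕ∞) χ)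
    (hχ01 : ∀ ξ, χ ξ ∈ Set.Icc (0 : ℝ) 1)
    (hχ1 : ∀ ξ : Euc n, 2 * C₀ < ‖ξ‖ → χ ξ = 1)
    (hχ0 : ∀ ξ : Euc n, ‖ξ‖ < C₀ → χ ξ = 0) :
    ∃ C : ℝ, 0 < C ∧
      ∀ (q : SchwartzMap (Euc n) ℂ) (r : ℝ), r ∈ Set.Ioo (1 - δ) (1 + δ) →
        eLpNorm (fun η : Euc n => (jap η ^ (α - 1) : ℝ) •
            deriv (fun s : ℝ => (χ η : ℂ) * Sr s (⇑q) η) r) 2 volume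
          ≤ ENNReal.ofReal C * (wSobNorm β 2 (⇑q)) ^ 2 := by
  obtain ⟨C, hC, bound⟩ := stmt7_general n hn (1 - δ) (1 + δ) (sub_pos.2 hδ1) β α hβ
    (hrange.imp_left And.right)
  exact ⟨C, hC, fun q r hr => bound (fun ξ => χ ξ)
    (fun ξ => by simpa [abs_of_nonneg (hχ01 ξ).1] using (hχ01 ξ).2)
    (fun ξ hξ => by simp [hχ0 ξ (hξ.trans_le hC₀)]) q r (Ioo_subset_Icc_self hr)⟩
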